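/- Let (s,u) be a global-in-time solution of problem (P) with initial data (s₀,φ) ∈ W. Then lim_{t→∞} ‖u(t)‖_{L^∞} = 0. -/

import Mathlib

open Set MeasureTheory Filter Topology Real
open scoped ENNReal

noncomputable section

/-- `(s₀, φ)` belongs to the class `W`: `s₀ ∈ (0,∞)`, `φ` is Lipschitz on `[0,s₀]`,
not identically zero, nonnegative there, and vanishes at `s₀`. -/
def memW (s₀ : ℝ) (φ : ℝ → ℝ) : Prop :=
  0 < s₀ ∧ (∃ K : NNReal, LipschitzOnWith K φ (Icc 0 s₀)) ∧
    (∃ x ∈ Icc 0 s₀, φ x ≠ 0) ∧ (∀ x ∈ Icc 0 s₀, 0 ≤ φ x) ∧ φ s₀ = 0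

/-- `(s,u)` is a solution of the one-phase Stefan problem (P) on `(0,T]` (finite `T`)
with exponent `p` and initial data `(s₀,φ)`. -/
structure IsSolOn (p s₀ : ℝ) (φ : ℝ → ℝ) (T : ℝ) (s : ℝ → ℝ) (u : ℝ → ℝ → ℝ) : Prop where
  T_pos : 0 < T
  s_cont : ContinuousOn s (Icc 0 T)
  s_diff : ∀ t ∈ Ioc 0 T, DifferentiableAt ℝ s t
  s_deriv_cont : ContinuousOn (deriv s) (Ioc 0 T)
  s_pos : ∀ t ∈ Icc 0 T, 0 < s t
  ut_diff : ∀ t ∈ Ioc 0 T, ∀ x ∈ Ioo 0 (s t), DifferentiableAt ℝ (fun τ => u τ x) t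
  ux_diff : ∀ t ∈ Ioc 0 T, ∀ x ∈ Ioo 0 (s t), DifferentiableAt ℝ (u t) x
  uxx_diff : ∀ t ∈ Ioc 0 T, ∀ x ∈ Ioo 0 (s t), DifferentiableAt ℝ (deriv (u t)) x
  ut_cont : ContinuousOn (fun q : ℝ × ℝ => deriv (fun τ => u τ q.2) q.1)
      {q : ℝ × ℝ | q.1 ∈ Ioc 0 T ∧ q.2 ∈ Ioo 0 (s q.1)}
  uxx_cont : ContinuousOn (fun q : ℝ × ℝ => deriv (deriv (u q.1)) q.2)
      {q : ℝ × ℝ | q.1 ∈ Ioc 0 T ∧ q.2 ∈ Ioo 0 (s q.1)}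
  ux_cont : ContinuousOn (fun q : ℝ × ℝ => deriv (u q.1) q.2)
      {q : ℝ × ℝ | q.1 ∈ Ioc 0 T ∧ q.2 ∈ Icc 0 (s q.1)}
  u_cont : ContinuousOn (fun q : ℝ × ℝ => u q.1 q.2)
      {q : ℝ × ℝ | q.1 ∈ Icc 0 T ∧ q.2 ∈ Icc 0 (s q.1)}
  u_nonneg : ∀ t ∈ Icc 0 T, ∀ x ∈ Icc 0 (s t), 0 ≤ u t x
  heat : ∀ t ∈ Ioc 0 T, ∀ x ∈ Ioo 0 (s t),
      deriv (fun τ => u τ x) t = deriv (deriv (u t)) x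
  bc_zero : ∀ t ∈ Ioc 0 T, -deriv (u t) 0 = u t 0 ^ p
  bc_free : ∀ t ∈ Ioc 0 T, u t (s t) = 0
  stefan : ∀ t ∈ Ioc 0 T, deriv s t = -deriv (u t) (s t)
  init : ∀ x ∈ Icc 0 s₀, u 0 x = φ x
  init_s : s 0 = s₀

/-- `(s,u)` is a global-in-time solution of problem (P). -/
def IsGlobalSol (p s₀ : ℝ) (φ : ℝ → ℝ) (s : ℝ → ℝ) (u : ℝ → ℝ → ℝ) : Prop :=
  ∀ T : ℝ, 0 < T → IsSolOn p s₀ φ T s u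

/-- `Tm ∈ (0,∞]` is the maximal existence time of the solution `(s,u)` of (P) with
initial data `(s₀,φ)`: the solution exists on `(0,T]` for every `T < Tm`, and for
`T > Tm` problem (P) admits no solution on `(0,T]`. -/
def IsMaxSol (p s₀ : ℝ) (φ : ℝ → ℝ) (Tm : ℝ≥0∞) (s : ℝ → ℝ) (u : ℝ → ℝ → ℝ) : Prop :=
  0 < Tm ∧
    (∀ T : ℝ, 0 < T → ENNReal.ofReal T < Tm → IsSolOn p s₀ φ T s u) ∧
    (∀ T : ℝ, Tm < ENNReal.ofReal T → ¬∃ σ v, IsSolOn p s₀ φ T σ v)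

/-- The sup norm `‖u(t)‖_{L^∞(0,s(t))}`. -/
def supNorm (s : ℝ → ℝ) (u : ℝ → ℝ → ℝ) (t : ℝ) : ℝ :=
  sSup (u t '' Ioo 0 (s t))

/-- The `L¹` norm `‖u(t)‖_{L¹(0,s(t))}` of the nonnegative function `u(t,·)`. -/
def L1Norm (s : ℝ → ℝ) (u : ℝ → ℝ → ℝ) (t : ℝ) : ℝ :=
  ∫ x in (0:ℝ)..(s t), u t x

/-- The energy `E(s(t),u(t))`. -/
def energy (p : ℝ) (s : ℝ → ℝ) (u : ℝ → ℝ → ℝ) (t : ℝ) : ℝ :=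
  1 / 2 * (∫ x in (0:ℝ)..(s t), (deriv (u t) x) ^ 2) - u t 0 ^ (p + 1) / (p + 1)

/-!
The energy `E = ½ ∫ u_x² - u(t,0)^(p+1) / (p+1)` is nonincreasing along a solution, and its decrease
controls `∫∫ u_t²`. For a global solution `E ≥ 0`: if `E` were negative at some time, Levine's
concavity method applied to `∫∫ u²` would force blow-up in finite time. Hence `∫∫ u_t²` over unit
time windows tends to zero. This makes `u_x` nearly constant on bounded ranges of `x`, in time
average. If the front stays bounded, its speed and hence the flux `u(t,0)^p` average to nearly zero;
if not, `x u(t,0)^p` is at most about `u(t,0)` for arbitrarily large `x`. Either way `u(t,0) → 0`.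
From then on `u ≤ ε + K τ^(-1/2) e^(-x²/4τ)` with `τ = t - T + 1` by the maximum principle, as the
heat kernel is nonnegative on the lateral boundary.

Since `u_t` and `u_xx` need not be regular up to the boundary, the energy identities are derived for
Steklov means in time with step `h`, and `h → 0` afterwards. The boundary term `u^p u_t` survives
the limit because the trace `t ↦ u(t,0)` has increments `o(√h)`.
-/

section TimeMeans

/-- The forward Steklov mean `h⁻¹ ∫_t^{t+h} a`, written as an integral over `[0, 1]` so that it is
jointly continuous up to `h = 0`, where it equals `a t`. -/
def steklovMean (a : ℝ → ℝ) (h t : ℝ) : ℝ := ∫ r in (0:ℝ)..1, a (t + h * r)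

/-- The forward difference quotient of `a` with step `h`, the time derivative of its Steklov
mean. -/
def diffQuot (a : ℝ → ℝ) (h t : ℝ) : ℝ := (a (t + h) - a t) / h

@[simp] lemma steklovMean_zero (a : ℝ → ℝ) (t : ℝ) : steklovMean a 0 t = a t := by
  simp [steklovMean]

lemma steklovMean_eq_inv_mul_integral (a : ℝ → ℝ) {h : ℝ} (hh : h ≠ 0) (t : ℝ) :
    steklovMean a h t = h⁻¹ * ∫ τ in t..(t + h), a τ := by
  simpa [steklovMean] using
    intervalIntegral.integral_comp_add_mul (a := 0) (b := 1) a hh t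

@[fun_prop]
lemma continuous_steklovMean {X : Type*} [TopologicalSpace X] {a : X → ℝ → ℝ} {h t : X → ℝ}
    (ha : Continuous (Function.uncurry a)) (hh : Continuous h) (ht : Continuous t) :
    Continuous fun q => steklovMean (a q) (h q) (t q) := by
  unfold steklovMean
  fun_prop

@[fun_prop]
lemma continuous_diffQuot {X : Type*} [TopologicalSpace X] {a : X → ℝ → ℝ} {t : X → ℝ}
    (ha : Continuous (Function.uncurry a)) (h : ℝ) (ht : Continuous t) :
    Continuous fun q => diffQuot (a q) h (t q) := by
  unfold diffQuot
  fun_prop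

lemma hasDerivAt_steklovMean {a : ℝ → ℝ} (ha : Continuous a) {h : ℝ} (hh : h ≠ 0) (t : ℝ) :
    HasDerivAt (steklovMean a h) (diffQuot a h t) t := by
  have heq : steklovMean a h =
      fun t => h⁻¹ * ((∫ τ in (0:ℝ)..(t + h), a τ) - ∫ τ in (0:ℝ)..t, a τ) := by
    funext t
    rw [steklovMean_eq_inv_mul_integral a hh, intervalIntegral.integral_interval_sub_left] <;>
      exact ha.intervalIntegrable _ _
  rw [heq, diffQuot, div_eq_inv_mul]
  exact (((ha.integral_hasStrictDerivAt 0 (t + h)).hasDerivAt.comp_add_const t h).sub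
    (ha.integral_hasStrictDerivAt 0 t).hasDerivAt).const_mul h⁻¹

lemma integral_diffQuot {a : ℝ → ℝ} (ha : Continuous a) {h : ℝ} (hh : h ≠ 0) (α β : ℝ) :
    ∫ t in α..β, diffQuot a h t = steklovMean a h β - steklovMean a h α :=
  intervalIntegral.integral_eq_sub_of_hasDerivAt (fun t _ => hasDerivAt_steklovMean ha hh t)
    (Continuous.intervalIntegrable (by fun_prop) _ _)

lemma sub_eq_mul_steklovMean_of_hasDerivAt {f g : ℝ → ℝ} (hg : Continuous g)
    (hfg : ∀ t, HasDerivAt f (g t) t) (t t' : ℝ) :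
    f t' - f t = (t' - t) * steklovMean g (t' - t) t := by
  rcases eq_or_ne t' t with rfl | hne
  · simp
  · rw [steklovMean_eq_inv_mul_integral g (sub_ne_zero.2 hne),
      mul_inv_cancel_left₀ (sub_ne_zero.2 hne), add_sub_cancel,
      intervalIntegral.integral_eq_sub_of_hasDerivAt (fun y _ => hfg y)
        (hg.intervalIntegrable _ _)]

end TimeMeans

section IntervalIntegrals

lemma hasDerivAt_sub_mul_of_continuousAt {m : ℝ → ℝ} {t : ℝ} (hm : ContinuousAt m t) :
    HasDerivAt (fun t' => (t' - t) * m t') (m t) t := by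
  rw [hasDerivAt_iff_tendsto_slope]
  refine (hm.tendsto.mono_left nhdsWithin_le_nhds).congr' ?_
  filter_upwards [self_mem_nhdsWithin] with y hy
  simp [slope_def_field, mul_div_cancel_left₀ _ (sub_ne_zero.2 hy)]

lemma hasDerivAt_integral_zero_to {s : ℝ → ℝ} {s' t : ℝ} {f g : ℝ → ℝ → ℝ} (hs : Continuous s)
    (hf : Continuous (Function.uncurry f)) (hg : Continuous (Function.uncurry g))
    (hfg : ∀ t x, HasDerivAt (fun τ => f τ x) (g t x) t) (hst : HasDerivAt s s' t) :
    HasDerivAt (fun t => ∫ x in (0:ℝ)..s t, f t x)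
      (s' * f t (s t) + ∫ x in (0:ℝ)..s t, g t x) t := by
  let m : ℝ → ℝ := fun t' => ∫ x in (0:ℝ)..s t', steklovMean (fun τ => g τ x) (t' - t) t
  have hm : Continuous m := by fun_prop
  have hmt : m t = ∫ x in (0:ℝ)..s t, g t x := by simp [m]
  have hsplit : (fun t' => ∫ x in (0:ℝ)..s t', f t' x) =
      fun t' => (∫ x in (0:ℝ)..s t', f t x) + (t' - t) * m t' := by
    funext t'
    rw [← intervalIntegral.integral_const_mul, ← intervalIntegral.integral_add]
    · refine intervalIntegral.integral_congr fun x _ => ?_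
      rw [← sub_eq_mul_steklovMean_of_hasDerivAt (by fun_prop) (fun t => hfg t x)]
      ring
    all_goals exact Continuous.intervalIntegrable (by fun_prop) _ _
  have hfront : HasDerivAt (fun t' => ∫ x in (0:ℝ)..s t', f t x) (s' * f t (s t)) t := by
    have hft : Continuous (f t) := by fun_prop
    rw [mul_comm]
    exact (hft.integral_hasStrictDerivAt 0 (s t)).hasDerivAt.comp t hst
  rw [hsplit, ← hmt]
  exact hfront.add (hasDerivAt_sub_mul_of_continuousAt hm.continuousAt)

lemma sq_integral_le {f : ℝ → ℝ} (hf : Continuous f) {a b : ℝ} (hab : a ≤ b) :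
    (∫ x in a..b, f x) ^ 2 ≤ (b - a) * ∫ x in a..b, f x ^ 2 := by
  have hquad : ∀ c : ℝ,
      0 ≤ (b - a) * (c * c) + -2 * (∫ x in a..b, f x) * c + ∫ x in a..b, f x ^ 2 := by
    intro c
    have hexpand : ∫ x in a..b, (f x - c) ^ 2 =
        (∫ x in a..b, f x ^ 2) - 2 * c * (∫ x in a..b, f x) + (b - a) * c ^ 2 := by
      simp_rw [sub_sq, mul_right_comm 2 (f _) c]
      rw [intervalIntegral.integral_add, intervalIntegral.integral_sub,
        intervalIntegral.integral_const_mul, intervalIntegral.integral_const, smul_eq_mul]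
      all_goals exact Continuous.intervalIntegrable (by fun_prop) _ _
    have hnonneg : 0 ≤ ∫ x in a..b, (f x - c) ^ 2 :=
      intervalIntegral.integral_nonneg hab fun x _ => sq_nonneg _
    linarith
  have hdisc := discrim_le_zero hquad
  rw [discrim] at hdisc
  linarith

lemma integral_integral_swap_of_continuous {f : ℝ → ℝ → ℝ} (hf : Continuous (Function.uncurry f))
    (a b c d : ℝ) :
    ∫ x in a..b, ∫ y in c..d, f x y = ∫ y in c..d, ∫ x in a..b, f x y := by
  apply intervalIntegral_intervalIntegral_swap
  have hint : IntegrableOn (Function.uncurry f) (uIcc a b ×ˢ uIcc c d) (volume.prod volume) :=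
    hf.continuousOn.integrableOn_compact (isCompact_uIcc.prod isCompact_uIcc)
  exact hint.mono_set (prod_mono uIoc_subset_uIcc uIoc_subset_uIcc)

/-- `F` is on `[0, S]` a primitive of `f`, in integrated form. -/
def IsPrimitiveOn (F f : ℝ → ℝ) (S : ℝ) : Prop :=
  ∀ x ∈ Icc 0 S, F x = F 0 + ∫ y in (0:ℝ)..x, f y

namespace IsPrimitiveOn

variable {F f G g : ℝ → ℝ} {S : ℝ}

lemma hasDerivAt (h : IsPrimitiveOn F f S) (hf : Continuous f) {x : ℝ} (hx : x ∈ Ioo 0 S) :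
    HasDerivAt F (f x) x := by
  refine ((hf.integral_hasStrictDerivAt 0 x).hasDerivAt.const_add (F 0)).congr_of_eventuallyEq ?_
  filter_upwards [Icc_mem_nhds hx.1 hx.2] with y hy using h y hy

lemma integral_mul_eq (hFf : IsPrimitiveOn F f S) (hGg : IsPrimitiveOn G g S) (hS : 0 ≤ S)
    (hF : Continuous F) (hG : Continuous G) (hf : Continuous f) (hg : Continuous g) :
    ∫ x in (0:ℝ)..S, F x * g x = F S * G S - F 0 * G 0 - ∫ x in (0:ℝ)..S, f x * G x := by
  apply intervalIntegral.integral_mul_deriv_eq_deriv_mul_of_hasDerivAt hF.continuousOn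
    hG.continuousOn _ _ (hf.intervalIntegrable _ _) (hg.intervalIntegrable _ _)
  all_goals
    intro x hx
    rw [min_eq_left hS, max_eq_right hS] at hx
  exacts [hFf.hasDerivAt hf hx, hGg.hasDerivAt hg hx]

lemma sq_sub_le (h : IsPrimitiveOn F f S) (hf : Continuous f) {x : ℝ} (hx : x ∈ Icc 0 S) :
    (F x - F 0) ^ 2 ≤ x * ∫ y in (0:ℝ)..S, f y ^ 2 := by
  have hmono : ∫ y in (0:ℝ)..x, f y ^ 2 ≤ ∫ y in (0:ℝ)..S, f y ^ 2 :=
    intervalIntegral.integral_mono_interval le_rfl hx.1 hx.2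
      (Eventually.of_forall fun y => sq_nonneg _) (Continuous.intervalIntegrable (by fun_prop) _ _)
  calc (F x - F 0) ^ 2 = (∫ y in (0:ℝ)..x, f y) ^ 2 := by rw [h x hx, add_sub_cancel_left]
    _ ≤ (x - 0) * ∫ y in (0:ℝ)..x, f y ^ 2 := sq_integral_le hf hx.1
    _ ≤ x * ∫ y in (0:ℝ)..S, f y ^ 2 := by
        rw [sub_zero]
        exact mul_le_mul_of_nonneg_left hmono hx.1

end IsPrimitiveOn

end IntervalIntegrals

section MeanChainRule

/-- The forward little Hölder condition of exponent `1/2`, uniformly on `I`: the increments of `a`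
satisfy `a (t + k) - a t = o(√k)`. -/
def LittleHalfHolderOn (a : ℝ → ℝ) (I : Set ℝ) : Prop :=
  ∀ ε > 0, ∃ δ > 0, ∀ t ∈ I, ∀ k ∈ Icc 0 δ, |a (t + k) - a t| ≤ ε * √k

variable {a g G : ℝ → ℝ}

lemma abs_steklovMean_sub_le (ha : Continuous a) {h t c C : ℝ}
    (hC : ∀ r ∈ Icc (0 : ℝ) 1, |a (t + h * r) - c| ≤ C) : |steklovMean a h t - c| ≤ C := by
  have heq : steklovMean a h t - c = ∫ r in (0:ℝ)..1, (a (t + h * r) - c) := by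
    rw [intervalIntegral.integral_sub]
    · simp [steklovMean]
    all_goals exact Continuous.intervalIntegrable (by fun_prop) _ _
  rw [heq]
  simpa using intervalIntegral.norm_integral_le_of_norm_le_const (a := (0:ℝ)) (b := 1)
    (f := fun r => a (t + h * r) - c) (C := C)
    fun r hr => hC r (Ioc_subset_Icc_self (by rwa [uIoc_of_le zero_le_one] at hr))

lemma abs_sub_steklovMean_comp_le (ha : Continuous a) (hg : Continuous g) {S : Set ℝ}
    (hS : Convex ℝ S) {L : NNReal} (hL : LipschitzOnWith L g S) {t h ρ : ℝ} (hh : 0 ≤ h)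
    (haS : ∀ k ∈ Icc 0 h, a (t + k) ∈ S) (hρ : ∀ k ∈ Icc 0 h, |a (t + k) - a t| ≤ ρ)
    {x : ℝ} (hx : x ∈ uIcc (a t) (a (t + h))) :
    |g x - steklovMean (fun τ => g (a τ)) h t| ≤ 2 * L * ρ := by
  have hh_mem : h ∈ Icc 0 h := ⟨hh, le_rfl⟩
  have hat : a t ∈ S := by simpa using haS 0 ⟨le_rfl, hh⟩
  have hxS : x ∈ S := hS.ordConnected.uIcc_subset hat (haS h hh_mem) hx
  have hx' : |a t - x| ≤ ρ := by
    rw [abs_sub_comm]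
    exact (abs_sub_left_of_mem_uIcc hx).trans (hρ h hh_mem)
  rw [abs_sub_comm]
  refine abs_steklovMean_sub_le (by fun_prop) fun r hr => ?_
  have hr' : h * r ∈ Icc 0 h := ⟨mul_nonneg hh hr.1, mul_le_of_le_one_right hh hr.2⟩
  calc |g (a (t + h * r)) - g x| ≤ L * |a (t + h * r) - x| := hL.dist_le_mul _ (haS _ hr') _ hxS
    _ ≤ L * (ρ + ρ) := by
        gcongr
        exact (abs_sub_le _ (a t) _).trans (add_le_add (hρ _ hr') hx')
    _ = 2 * L * ρ := by ring

lemma abs_steklovMean_mul_diffQuot_sub_le (ha : Continuous a) (hg : Continuous g)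
    (hG : ∀ x, HasDerivAt G (g x) x) {S : Set ℝ} (hS : Convex ℝ S) {L : NNReal}
    (hL : LipschitzOnWith L g S) {t h ε : ℝ} (hh : 0 < h) (haS : ∀ k ∈ Icc 0 h, a (t + k) ∈ S)
    (hε : ∀ k ∈ Icc 0 h, |a (t + k) - a t| ≤ ε * √k) :
    |steklovMean (fun τ => g (a τ)) h t * diffQuot a h t - diffQuot (fun τ => G (a τ)) h t| ≤
      2 * L * ε ^ 2 := by
  set c := steklovMean (fun τ => g (a τ)) h t
  have hh_mem : h ∈ Icc 0 h := ⟨hh.le, le_rfl⟩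
  have hε0 : 0 ≤ ε :=
    nonneg_of_mul_nonneg_left ((abs_nonneg _).trans (hε h hh_mem)) (sqrt_pos.2 hh)
  have hclose : ∀ k ∈ Icc 0 h, |a (t + k) - a t| ≤ ε * √h := fun k hk =>
    (hε k hk).trans (by gcongr; exact hk.2)
  have hmvt : |(G (a (t + h)) - c * a (t + h)) - (G (a t) - c * a t)| ≤
      2 * L * (ε * √h) * |a (t + h) - a t| :=
    Convex.norm_image_sub_le_of_norm_hasDerivWithin_le (f := fun x => G x - c * x)
      (fun x _ => ((hG x).sub (hasDerivAt_const_mul c)).hasDerivWithinAt)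
      (fun x hx => abs_sub_steklovMean_comp_le ha hg hS hL hh.le haS hclose hx)
      (convex_uIcc _ _) left_mem_uIcc right_mem_uIcc
  have hrw : c * diffQuot a h t - diffQuot (fun τ => G (a τ)) h t =
      -((G (a (t + h)) - c * a (t + h)) - (G (a t) - c * a t)) / h := by
    simp only [diffQuot]
    ring
  rw [hrw, abs_div, abs_neg, abs_of_pos hh, div_le_iff₀ hh]
  calc _ ≤ 2 * L * (ε * √h) * (ε * √h) := hmvt.trans (by gcongr; exact hclose h hh_mem)
    _ = 2 * L * ε ^ 2 * (√h) ^ 2 := by ring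
    _ = 2 * L * ε ^ 2 * h := by rw [sq_sqrt hh.le]

lemma tendsto_integral_diffQuot (ha : Continuous a) (α β : ℝ) :
    Tendsto (fun h => ∫ t in α..β, diffQuot a h t) (𝓝[>] 0) (𝓝 (a β - a α)) := by
  have hcont : Continuous fun h => steklovMean a h β - steklovMean a h α := by fun_prop
  have hlim := hcont.continuousWithinAt (s := Ioi 0) (x := 0)
  simp only [ContinuousWithinAt, steklovMean_zero] at hlim
  refine hlim.congr' ?_
  filter_upwards [self_mem_nhdsWithin] with h hh
  rw [integral_diffQuot ha (ne_of_gt hh)]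

/- The error in the chain rule is quadratic in the increments of `a`, hence `o(h)` under the little
`1/2`-Hölder condition. -/
lemma tendsto_integral_chainRule_error (ha : Continuous a) (hg : LocallyLipschitz g)
    (hG : ∀ x, HasDerivAt G (g x) x) {α β : ℝ} (hαβ : α ≤ β)
    (hmod : LittleHalfHolderOn a (Icc α β)) :
    Tendsto (fun h => ∫ t in α..β, (steklovMean (fun τ => g (a τ)) h t * diffQuot a h t -
      diffQuot (fun τ => G (a τ)) h t)) (𝓝[>] 0) (𝓝 0) := by
  obtain ⟨R, hR⟩ := ((isCompact_Icc (a := α) (b := β + 1)).image ha).isBounded.subset_closedBall 0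
  obtain ⟨L, hL⟩ := hg.locallyLipschitzOn.exists_lipschitzOnWith_of_compact
    (isCompact_closedBall (0:ℝ) R)
  refine Metric.tendsto_nhds.2 fun η hη => ?_
  have hden : 0 < 2 * L * (β - α) + 1 := by have := sub_nonneg.2 hαβ; positivity
  obtain ⟨δ, hδ, hinc⟩ := hmod √(η / (2 * L * (β - α) + 1)) (sqrt_pos.2 (by positivity))
  filter_upwards [Ioo_mem_nhdsGT (lt_min hδ one_pos)] with h hh
  have hpoint : ∀ t ∈ uIoc α β, ‖steklovMean (fun τ => g (a τ)) h t * diffQuot a h t -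
      diffQuot (fun τ => G (a τ)) h t‖ ≤ 2 * L * (η / (2 * L * (β - α) + 1)) := by
    intro t ht
    have ht : t ∈ Icc α β := Ioc_subset_Icc_self (uIoc_of_le hαβ ▸ ht)
    have hbound := abs_steklovMean_mul_diffQuot_sub_le ha hg.continuous hG
      (convex_closedBall 0 R) hL hh.1 (fun k hk => hR ⟨t + k, ⟨by linarith [ht.1, hk.1],
        by linarith [ht.2, hk.2, hh.2, min_le_right δ 1]⟩, rfl⟩)
      (fun k hk => hinc t ht k ⟨hk.1, hk.2.trans (hh.2.le.trans (min_le_left _ _))⟩)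
    rwa [sq_sqrt (by positivity)] at hbound
  rw [dist_zero_right]
  refine (intervalIntegral.norm_integral_le_of_norm_le_const hpoint).trans_lt ?_
  rw [abs_of_nonneg (sub_nonneg.2 hαβ), mul_div_assoc', div_mul_eq_mul_div, div_lt_iff₀ hden]
  linarith

lemma tendsto_integral_steklovMean_mul_diffQuot (ha : Continuous a) (hg : LocallyLipschitz g)
    (hG : ∀ x, HasDerivAt G (g x) x) {α β : ℝ} (hαβ : α ≤ β)
    (hmod : LittleHalfHolderOn a (Icc α β)) :
    Tendsto (fun h => ∫ t in α..β, steklovMean (fun τ => g (a τ)) h t * diffQuot a h t)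
      (𝓝[>] 0) (𝓝 (G (a β) - G (a α))) := by
  have hgc : Continuous g := hg.continuous
  have hGc : Continuous G := continuous_iff_continuousAt.2 fun x => (hG x).continuousAt
  have hsum := (tendsto_integral_chainRule_error ha hg hG hαβ hmod).add
    (tendsto_integral_diffQuot (hGc.comp ha) α β)
  rw [zero_add] at hsum
  refine hsum.congr fun h => ?_
  rw [intervalIntegral.integral_sub]
  · exact sub_add_cancel _ _
  all_goals exact Continuous.intervalIntegrable (by fun_prop) _ _

end MeanChainRule

section UniformOscillation

lemma exists_forall_abs_sub_le {w : ℝ → ℝ → ℝ} (hw : Continuous (Function.uncurry w)) (a b : ℝ)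
    {R ε : ℝ} (hR : 0 < R) (hε : 0 < ε) :
    ∃ m ∈ Ioc 0 R, ∀ τ ∈ Icc a b, ∀ σ ∈ Icc a b, |τ - σ| ≤ m →
      ∀ x ∈ Icc 0 m, ∀ z ∈ Icc 0 m, |w τ x - w σ z| ≤ ε := by
  have hcompact : IsCompact (Icc a b ×ˢ Icc 0 R) := isCompact_Icc.prod isCompact_Icc
  obtain ⟨η, hη, hunif⟩ := Metric.uniformContinuousOn_iff_le.1
    (hcompact.uniformContinuousOn_of_continuous hw.continuousOn) ε hε
  refine ⟨min R η, ⟨lt_min hR hη, min_le_left _ _⟩, fun τ hτ σ hσ hτσ x hx z hz => ?_⟩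
  have hle : ∀ y ∈ Icc 0 (min R η), y ∈ Icc 0 R := fun y hy => ⟨hy.1, hy.2.trans (min_le_left _ _)⟩
  refine hunif (τ, x) ⟨hτ, hle x hx⟩ (σ, z) ⟨hσ, hle z hz⟩ (max_le ?_ ?_)
  · exact hτσ.trans (min_le_right _ _)
  · exact (abs_sub_le_of_nonneg_of_le hx.1 hx.2 hz.1 hz.2).trans (min_le_right _ _)

end UniformOscillation

/-- A solution of the Stefan problem from time `t₀` on, in integrated form: `v` is the temperature,
`w` its space derivative and `s` the free boundary. All functions are defined and continuous on the
whole plane, and the heat equation is integrated in time and space, because `∂_t u` need not be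
continuous up to the lateral boundary. -/
structure IntegratedSol (p t₀ : ℝ) (s : ℝ → ℝ) (v w : ℝ → ℝ → ℝ) : Prop where
  continuous_front : Continuous s
  monotone_front : Monotone s
  front_pos : ∀ t, 0 < s t
  hasDerivAt_front : ∀ t, t₀ < t → HasDerivAt s (-w t (s t)) t
  continuous_temp : Continuous (Function.uncurry v)
  continuous_grad : Continuous (Function.uncurry w)
  temp_nonneg : ∀ t x, 0 ≤ v t x
  temp_front : ∀ t, v t (s t) = 0
  grad_zero : ∀ t, w t 0 = -v t 0 ^ p
  grad_front_nonpos : ∀ t, w t (s t) ≤ 0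
  isPrimitiveOn_temp : ∀ t, IsPrimitiveOn (v t) (w t) (s t)
  heat : ∀ t t' x, t₀ ≤ t → t ≤ t' → x ∈ Icc 0 (s t) →
    ∫ y in (0:ℝ)..x, (v t' y - v t y) = ∫ τ in t..t', (w τ x - w τ 0)

/-- The squared `L²` norm of `∂_t v` over the moving domain between the times `α` and `β`, with the
time derivative replaced by the difference quotient with step `h`. -/
def dissipation (s : ℝ → ℝ) (v : ℝ → ℝ → ℝ) (h α β : ℝ) : ℝ :=
  ∫ t in α..β, ∫ x in (0:ℝ)..s t, diffQuot (fun τ => v τ x) h t ^ 2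

namespace IntegratedSol

variable {p t₀ : ℝ} {s : ℝ → ℝ} {v w : ℝ → ℝ → ℝ}

section SteklovIdentities

lemma isPrimitiveOn_steklovMean_temp (H : IntegratedSol p t₀ s v w) {h : ℝ} (hh : 0 ≤ h) (t : ℝ) :
    IsPrimitiveOn (fun x => steklovMean (fun τ => v τ x) h t)
      (fun x => steklovMean (fun τ => w τ x) h t) (s t) := by
  intro x hx
  have hv := H.continuous_temp
  have hw := H.continuous_grad
  simp only [steklovMean]
  rw [← integral_integral_swap_of_continuous (f := fun r y => w (t + h * r) y)
    (by fun_prop) 0 1 0 x,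
    ← intervalIntegral.integral_add]
  · refine intervalIntegral.integral_congr fun r hr => ?_
    rw [uIcc_of_le zero_le_one] at hr
    exact H.isPrimitiveOn_temp _ x ⟨hx.1, hx.2.trans
      (H.monotone_front (le_add_of_nonneg_right (mul_nonneg hh hr.1)))⟩
  all_goals exact Continuous.intervalIntegrable (by fun_prop) _ _

lemma isPrimitiveOn_steklovMean_grad (H : IntegratedSol p t₀ s v w) {h t : ℝ} (hh : 0 < h)
    (ht : t₀ ≤ t) :
    IsPrimitiveOn (fun x => steklovMean (fun τ => w τ x) h t)
      (fun x => diffQuot (fun τ => v τ x) h t) (s t) := by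
  intro x hx
  have hw := H.continuous_grad
  simp only [diffQuot, steklovMean_eq_inv_mul_integral _ hh.ne']
  rw [intervalIntegral.integral_div, H.heat t (t + h) x ht (by linarith) hx,
    intervalIntegral.integral_sub]
  · ring
  all_goals exact Continuous.intervalIntegrable (by fun_prop) _ _

lemma isPrimitiveOn_diffQuot_temp (H : IntegratedSol p t₀ s v w) {h : ℝ} (hh : 0 ≤ h) (t : ℝ) :
    IsPrimitiveOn (fun x => diffQuot (fun τ => v τ x) h t)
      (fun x => diffQuot (fun τ => w τ x) h t) (s t) := by
  intro x hx
  have hw := H.continuous_grad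
  have hx' : x ∈ Icc 0 (s (t + h)) :=
    ⟨hx.1, hx.2.trans (H.monotone_front (le_add_of_nonneg_right hh))⟩
  simp only [diffQuot]
  rw [intervalIntegral.integral_div, intervalIntegral.integral_sub, H.isPrimitiveOn_temp t x hx,
    H.isPrimitiveOn_temp (t + h) x hx']
  · ring
  all_goals exact Continuous.intervalIntegrable (by fun_prop) _ _

lemma integral_sq_steklovMean_sub (H : IntegratedSol p t₀ s v w) {f : ℝ → ℝ → ℝ}
    (hf : Continuous (Function.uncurry f)) {h α β : ℝ} (hh : h ≠ 0) (hα : t₀ ≤ α) (hαβ : α ≤ β) :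
    (∫ x in (0:ℝ)..s β, steklovMean (fun τ => f τ x) h β ^ 2) -
        (∫ x in (0:ℝ)..s α, steklovMean (fun τ => f τ x) h α ^ 2) =
      ∫ t in α..β, (-w t (s t) * steklovMean (fun τ => f τ (s t)) h t ^ 2 +
        2 * ∫ x in (0:ℝ)..s t,
          steklovMean (fun τ => f τ x) h t * diffQuot (fun τ => f τ x) h t) := by
  have hw := H.continuous_grad
  have hs := H.continuous_front
  refine (intervalIntegral.integral_eq_sub_of_hasDerivAt_of_le
    (f := fun t => ∫ x in (0:ℝ)..s t, steklovMean (fun τ => f τ x) h t ^ 2) hαβ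
    (Continuous.continuousOn (by fun_prop)) (fun t ht => ?_)
    (Continuous.intervalIntegrable (by fun_prop) _ _)).symm
  rw [← intervalIntegral.integral_const_mul]
  refine hasDerivAt_integral_zero_to (f := fun t x => steklovMean (fun τ => f τ x) h t ^ 2)
    (g := fun t x => 2 * (steklovMean (fun τ => f τ x) h t * diffQuot (fun τ => f τ x) h t))
    hs (by fun_prop) (by fun_prop) (fun t x => ?_) (H.hasDerivAt_front t (hα.trans_lt ht.1))
  refine ((hasDerivAt_steklovMean (by fun_prop) hh t).pow 2).congr_deriv ?_
  simp only [Nat.cast_ofNat, Nat.add_one_sub_one, pow_one]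
  ring

lemma integral_steklovMean_grad_mul_diffQuot (H : IntegratedSol p t₀ s v w) {h t : ℝ} (hh : 0 < h)
    (ht : t₀ ≤ t) :
    ∫ x in (0:ℝ)..s t, steklovMean (fun τ => w τ x) h t * diffQuot (fun τ => w τ x) h t =
      steklovMean (fun τ => w τ (s t)) h t * diffQuot (fun τ => v τ (s t)) h t -
        steklovMean (fun τ => w τ 0) h t * diffQuot (fun τ => v τ 0) h t -
        ∫ x in (0:ℝ)..s t, diffQuot (fun τ => v τ x) h t ^ 2 := by
  have hv := H.continuous_temp
  have hw := H.continuous_grad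
  rw [(H.isPrimitiveOn_steklovMean_grad hh ht).integral_mul_eq
    (H.isPrimitiveOn_diffQuot_temp hh.le t) (H.front_pos t).le (by fun_prop) (by fun_prop)
    (by fun_prop) (by fun_prop)]
  simp only [← pow_two]

lemma integral_steklovMean_temp_mul_diffQuot (H : IntegratedSol p t₀ s v w) {h t : ℝ} (hh : 0 < h)
    (ht : t₀ ≤ t) :
    ∫ x in (0:ℝ)..s t, steklovMean (fun τ => v τ x) h t * diffQuot (fun τ => v τ x) h t =
      steklovMean (fun τ => v τ (s t)) h t * steklovMean (fun τ => w τ (s t)) h t -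
        steklovMean (fun τ => v τ 0) h t * steklovMean (fun τ => w τ 0) h t -
        ∫ x in (0:ℝ)..s t, steklovMean (fun τ => w τ x) h t ^ 2 := by
  have hv := H.continuous_temp
  have hw := H.continuous_grad
  rw [(H.isPrimitiveOn_steklovMean_temp hh.le t).integral_mul_eq
    (H.isPrimitiveOn_steklovMean_grad hh ht) (H.front_pos t).le (by fun_prop) (by fun_prop)
    (by fun_prop) (by fun_prop)]
  simp only [← pow_two]

end SteklovIdentities

section Trace

lemma abs_temp_increment_sub_trace_increment_le (H : IntegratedSol p t₀ s v w) {t k l ε : ℝ}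
    (hk : 0 ≤ k) (hl : l ∈ Icc 0 (s t)) (hosc : ∀ x ∈ Icc 0 l, |w (t + k) x - w t x| ≤ ε)
    {y : ℝ} (hy : y ∈ Icc 0 l) :
    |(v (t + k) y - v t y) - (v (t + k) 0 - v t 0)| ≤ ε * l := by
  have hw := H.continuous_grad
  have hyt : y ∈ Icc 0 (s t) := ⟨hy.1, hy.2.trans hl.2⟩
  have heq : (v (t + k) y - v t y) - (v (t + k) 0 - v t 0) =
      ∫ z in (0:ℝ)..y, (w (t + k) z - w t z) := by
    rw [intervalIntegral.integral_sub, H.isPrimitiveOn_temp t y hyt, H.isPrimitiveOn_temp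
      (t + k) y ⟨hyt.1, hyt.2.trans (H.monotone_front (le_add_of_nonneg_right hk))⟩]
    · ring
    all_goals exact Continuous.intervalIntegrable (by fun_prop) _ _
  have hε : 0 ≤ ε := (abs_nonneg _).trans (hosc 0 ⟨le_rfl, hl.1⟩)
  rw [heq, ← norm_eq_abs]
  refine (intervalIntegral.norm_integral_le_of_norm_le_const (C := ε) fun z hz => ?_).trans ?_
  · rw [uIoc_of_le hy.1] at hz
    exact hosc z ⟨hz.1.le, hz.2.trans hy.2⟩
  · rw [sub_zero, abs_of_nonneg hy.1]
    exact mul_le_mul_of_nonneg_left hy.2 hε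

lemma mul_abs_trace_increment_le (H : IntegratedSol p t₀ s v w) {t k l ε : ℝ} (ht : t₀ ≤ t)
    (hk : 0 ≤ k) (hl : l ∈ Icc 0 (s t))
    (hosc : ∀ τ ∈ Icc t (t + k), ∀ σ ∈ Icc t (t + k), ∀ x ∈ Icc 0 l, ∀ z ∈ Icc 0 l,
      |w τ x - w σ z| ≤ ε) :
    l * |v (t + k) 0 - v t 0| ≤ ε * k + ε * l * l := by
  have hv := H.continuous_temp
  have htk : t ≤ t + k := le_add_of_nonneg_right hk
  have hflux : ‖∫ τ in t..(t + k), (w τ l - w τ 0)‖ ≤ ε * |t + k - t| := by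
    refine intervalIntegral.norm_integral_le_of_norm_le_const fun τ hτ => ?_
    have hτ : τ ∈ Icc t (t + k) := Ioc_subset_Icc_self (uIoc_of_le htk ▸ hτ)
    exact hosc τ hτ τ hτ l ⟨hl.1, le_rfl⟩ 0 ⟨le_rfl, hl.1⟩
  rw [norm_eq_abs, add_sub_cancel_left, abs_of_nonneg hk] at hflux
  have hmass : ‖∫ y in (0:ℝ)..l, ((v (t + k) y - v t y) - (v (t + k) 0 - v t 0))‖ ≤
      ε * l * |l - 0| := by
    refine intervalIntegral.norm_integral_le_of_norm_le_const fun y hy => ?_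
    rw [uIoc_of_le hl.1] at hy
    exact H.abs_temp_increment_sub_trace_increment_le hk hl
      (fun x hx => hosc _ ⟨htk, le_rfl⟩ _ ⟨le_rfl, htk⟩ x hx x hx) (Ioc_subset_Icc_self hy)
  rw [intervalIntegral.integral_sub (Continuous.intervalIntegrable (by fun_prop) _ _)
    (Continuous.intervalIntegrable (by fun_prop) _ _), H.heat t (t + k) l ht htk hl,
    intervalIntegral.integral_const, sub_zero, smul_eq_mul, norm_eq_abs, abs_of_nonneg hl.1]
    at hmass
  calc l * |v (t + k) 0 - v t 0| = |l * (v (t + k) 0 - v t 0)| := by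
        rw [abs_mul, abs_of_nonneg hl.1]
    _ ≤ ε * k + ε * l * l := by
        rw [abs_le] at hflux hmass ⊢
        constructor <;> linarith

lemma littleHalfHolderOn_trace (H : IntegratedSol p t₀ s v w) (T : ℝ) :
    LittleHalfHolderOn (fun t => v t 0) (Icc t₀ T) := by
  intro ε hε
  obtain ⟨m, ⟨hm, hmR⟩, hosc⟩ := exists_forall_abs_sub_le H.continuous_grad t₀ (T + 1)
    (lt_min (H.front_pos t₀) one_pos) (half_pos hε)
  have hm1 : m ≤ 1 := hmR.trans (min_le_right _ _)
  refine ⟨m ^ 2, by positivity, fun t ht k hk => ?_⟩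
  rcases hk.1.eq_or_lt with rfl | hk0
  · simp
  have hl : √k ≤ m := sqrt_le_left hm.le |>.2 hk.2
  have hkm : k ≤ m := hk.2.trans (pow_le_of_le_one hm.le hm1 two_ne_zero)
  have hsq : √k * √k = k := mul_self_sqrt hk.1
  have htime : ∀ τ ∈ Icc t (t + k), τ ∈ Icc t₀ (T + 1) := fun τ hτ =>
    ⟨ht.1.trans hτ.1, by linarith [hτ.2, ht.2]⟩
  have hspace : ∀ x ∈ Icc 0 √k, x ∈ Icc 0 m := fun x hx => ⟨hx.1, hx.2.trans hl⟩
  have hbound := H.mul_abs_trace_increment_le (ε := ε / 2) ht.1 hk.1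
    ⟨sqrt_nonneg k, (hl.trans (hmR.trans (min_le_left _ _))).trans (H.monotone_front ht.1)⟩
    fun τ hτ σ hσ x hx z hz => hosc τ (htime τ hτ) σ (htime σ hσ)
      (abs_le.2 ⟨by linarith [hτ.1, hσ.2], by linarith [hτ.2, hσ.1]⟩) x (hspace x hx) z
      (hspace z hz)
  refine le_of_mul_le_mul_left (hbound.trans_eq ?_) (sqrt_pos.2 hk0)
  linear_combination (ε / 2 - ε) * hsq

end Trace

end IntegratedSol

namespace IntegratedSol

variable {p t₀ : ℝ} {s : ℝ → ℝ} {v w : ℝ → ℝ → ℝ}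

section EnergyBalance

lemma energy_eq (H : IntegratedSol p t₀ s v w) (t : ℝ) :
    energy p s v t = 1 / 2 * (∫ x in (0:ℝ)..s t, w t x ^ 2) - v t 0 ^ (p + 1) / (p + 1) := by
  have hw := H.continuous_grad
  rw [energy, intervalIntegral.integral_of_le (H.front_pos t).le,
    intervalIntegral.integral_of_le (H.front_pos t).le, integral_Ioc_eq_integral_Ioo,
    integral_Ioc_eq_integral_Ioo, setIntegral_congr_fun measurableSet_Ioo fun x hx => ?_]
  rw [((H.isPrimitiveOn_temp t).hasDerivAt (by fun_prop) hx).deriv]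

lemma integral_grad_front (H : IntegratedSol p t₀ s v w) {t t' : ℝ} (ht : t₀ ≤ t) (htt' : t ≤ t') :
    ∫ τ in t..t', w τ (s τ) = s t - s t' := by
  have hw := H.continuous_grad
  have hs := H.continuous_front
  have hint := intervalIntegral.integral_eq_sub_of_hasDerivAt_of_le htt' hs.continuousOn
    (fun τ hτ => H.hasDerivAt_front τ (ht.trans_lt hτ.1))
    (Continuous.intervalIntegrable (by fun_prop) _ _)
  rw [intervalIntegral.integral_neg] at hint
  linarith

lemma diffQuot_temp_front (H : IntegratedSol p t₀ s v w) {h t : ℝ} (hh : 0 < h) (ht : t₀ ≤ t) :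
    diffQuot (fun τ => v τ (s t)) h t = steklovMean (fun τ => w τ (s τ)) h t *
      steklovMean (w (t + h)) (s (t + h) - s t) (s t) := by
  have hw := H.continuous_grad
  have hle : s t ≤ s (t + h) := H.monotone_front (by linarith)
  have htemp : v (t + h) (s t) = -∫ y in (s t)..s (t + h), w (t + h) y := by
    have hfront := H.isPrimitiveOn_temp (t + h) (s (t + h)) ⟨(H.front_pos _).le, le_rfl⟩
    rw [H.temp_front, ← intervalIntegral.integral_add_adjacent_intervals (b := s t)] at hfront
    · rw [H.isPrimitiveOn_temp (t + h) (s t) ⟨(H.front_pos t).le, hle⟩]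
      linarith
    all_goals exact Continuous.intervalIntegrable (by fun_prop) _ _
  have hspace : (s (t + h) - s t) * steklovMean (w (t + h)) (s (t + h) - s t) (s t) =
      ∫ y in (s t)..s (t + h), w (t + h) y := by
    simp [steklovMean]
  rw [diffQuot, H.temp_front, htemp, ← hspace, steklovMean_eq_inv_mul_integral _ hh.ne',
    H.integral_grad_front ht (by linarith)]
  ring

lemma dissipation_eq (H : IntegratedSol p t₀ s v w) {h α β : ℝ} (hh : 0 < h) (hα : t₀ ≤ α)
    (hαβ : α ≤ β) :
    dissipation s v h α β =
      1 / 2 * (∫ x in (0:ℝ)..s α, steklovMean (fun τ => w τ x) h α ^ 2) -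
        1 / 2 * (∫ x in (0:ℝ)..s β, steklovMean (fun τ => w τ x) h β ^ 2) +
        (∫ t in α..β, (-w t (s t) * steklovMean (fun τ => w τ (s t)) h t ^ 2 / 2 +
          steklovMean (fun τ => w τ (s t)) h t * (steklovMean (fun τ => w τ (s τ)) h t *
            steklovMean (w (t + h)) (s (t + h) - s t) (s t)))) +
        ∫ t in α..β, steklovMean (fun τ => v τ 0 ^ p) h t * diffQuot (fun τ => v τ 0) h t := by
  have hv := H.continuous_temp
  have hw := H.continuous_grad
  have hs := H.continuous_front
  have hmean : ∀ t, steklovMean (fun τ => v τ 0 ^ p) h t = -steklovMean (fun τ => w τ 0) h t := by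
    simp [steklovMean, H.grad_zero]
  have hbalance : ∀ t ∈ uIcc α β,
      -w t (s t) * steklovMean (fun τ => w τ (s t)) h t ^ 2 + 2 *
        (∫ x in (0:ℝ)..s t, steklovMean (fun τ => w τ x) h t * diffQuot (fun τ => w τ x) h t) =
      2 * (-w t (s t) * steklovMean (fun τ => w τ (s t)) h t ^ 2 / 2 +
        steklovMean (fun τ => w τ (s t)) h t * (steklovMean (fun τ => w τ (s τ)) h t *
          steklovMean (w (t + h)) (s (t + h) - s t) (s t)) -
        steklovMean (fun τ => w τ 0) h t * diffQuot (fun τ => v τ 0) h t -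
        ∫ x in (0:ℝ)..s t, diffQuot (fun τ => v τ x) h t ^ 2) := by
    intro t ht
    rw [uIcc_of_le hαβ] at ht
    rw [H.integral_steklovMean_grad_mul_diffQuot hh (hα.trans ht.1),
      H.diffQuot_temp_front hh (hα.trans ht.1)]
    ring
  have hsq := H.integral_sq_steklovMean_sub hw hh.ne' hα hαβ
  rw [intervalIntegral.integral_congr hbalance, intervalIntegral.integral_const_mul,
    intervalIntegral.integral_sub, intervalIntegral.integral_sub] at hsq
  · simp only [hmean, neg_mul, intervalIntegral.integral_neg, dissipation] at hsq ⊢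
    linarith
  all_goals exact Continuous.intervalIntegrable (by fun_prop) _ _

lemma tendsto_integral_trace_mean (H : IntegratedSol p t₀ s v w) (hp : 1 < p) {α β : ℝ}
    (hα : t₀ ≤ α) (hαβ : α ≤ β) :
    Tendsto (fun h => ∫ t in α..β,
        steklovMean (fun τ => v τ 0 ^ p) h t * diffQuot (fun τ => v τ 0) h t)
      (𝓝[>] 0) (𝓝 (v β 0 ^ (p + 1) / (p + 1) - v α 0 ^ (p + 1) / (p + 1))) := by
  have hv := H.continuous_temp
  refine tendsto_integral_steklovMean_mul_diffQuot (g := fun x => x ^ p)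
    (G := fun x => x ^ (p + 1) / (p + 1)) (by fun_prop) ?_ (fun x => ?_) hαβ
    fun ε hε => ?_
  · exact (contDiff_rpow_const_of_le (n := 1) (by simpa using hp.le)).locallyLipschitz
  · refine ((hasDerivAt_rpow_const (p := p + 1) (Or.inr (by linarith))).div_const
      (p + 1)).congr_deriv ?_
    rw [add_sub_cancel_right, mul_div_cancel_left₀ _ (by linarith)]
  · obtain ⟨δ, hδ, hmod⟩ := H.littleHalfHolderOn_trace β ε hε
    exact ⟨δ, hδ, fun t ht => hmod t ⟨hα.trans ht.1, ht.2⟩⟩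

lemma tendsto_dissipation (H : IntegratedSol p t₀ s v w) (hp : 1 < p) {α β : ℝ}
    (hα : t₀ ≤ α) (hαβ : α ≤ β) :
    Tendsto (fun h => dissipation s v h α β) (𝓝[>] 0)
      (𝓝 (energy p s v α - energy p s v β + ∫ t in α..β, w t (s t) ^ 3 / 2)) := by
  have hw := H.continuous_grad
  have hs := H.continuous_front
  have hcont : Continuous fun h =>
      1 / 2 * (∫ x in (0:ℝ)..s α, steklovMean (fun τ => w τ x) h α ^ 2) -
        1 / 2 * (∫ x in (0:ℝ)..s β, steklovMean (fun τ => w τ x) h β ^ 2) +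
        (∫ t in α..β, (-w t (s t) * steklovMean (fun τ => w τ (s t)) h t ^ 2 / 2 +
          steklovMean (fun τ => w τ (s t)) h t * (steklovMean (fun τ => w τ (s τ)) h t *
            steklovMean (w (t + h)) (s (t + h) - s t) (s t)))) := by fun_prop
  have hlim := (hcont.continuousWithinAt (s := Ioi 0) (x := 0)).tendsto.add
    (H.tendsto_integral_trace_mean hp hα hαβ)
  have hfront : ∀ t, -w t (s t) * w t (s t) ^ 2 / 2 + w t (s t) * (w t (s t) * w t (s t)) =
      w t (s t) ^ 3 / 2 := fun t => by ring
  simp only [steklovMean_zero, add_zero, sub_self, hfront] at hlim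
  convert hlim.congr' ?_ using 2
  · rw [H.energy_eq, H.energy_eq]
    ring
  · filter_upwards [self_mem_nhdsWithin] with h hh
    exact (H.dissipation_eq hh hα hαβ).symm

lemma integral_grad_front_cube_nonpos (H : IntegratedSol p t₀ s v w) {α β : ℝ} (hαβ : α ≤ β) :
    ∫ t in α..β, w t (s t) ^ 3 / 2 ≤ 0 := by
  rw [intervalIntegral.integral_of_le hαβ]
  exact integral_nonpos fun t => div_nonpos_of_nonpos_of_nonneg
    (Odd.pow_nonpos (by decide) (H.grad_front_nonpos t)) two_pos.le

lemma dissipation_nonneg (H : IntegratedSol p t₀ s v w) (h : ℝ) {α β : ℝ} (hαβ : α ≤ β) :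
    0 ≤ dissipation s v h α β :=
  intervalIntegral.integral_nonneg hαβ fun t _ =>
    intervalIntegral.integral_nonneg (H.front_pos t).le fun _ _ => sq_nonneg _

lemma energy_le_energy (H : IntegratedSol p t₀ s v w) (hp : 1 < p) {α β : ℝ}
    (hα : t₀ ≤ α) (hαβ : α ≤ β) : energy p s v β ≤ energy p s v α := by
  have hnonneg := ge_of_tendsto' (H.tendsto_dissipation hp hα hαβ)
    fun h => H.dissipation_nonneg h hαβ
  linarith [H.integral_grad_front_cube_nonpos hαβ]

end EnergyBalance

section FluxEstimate

lemma integral_sq_steklovMean_flux_le (H : IntegratedSol p t₀ s v w) {h α β : ℝ} (hh : 0 < h)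
    (hα : t₀ ≤ α) (hαβ : α ≤ β) {X : ℝ → ℝ} (hX : Continuous X) {b : ℝ}
    (hXmem : ∀ t ∈ Icc α β, X t ∈ Icc 0 (s t)) (hXb : ∀ t ∈ Icc α β, X t ≤ b) :
    ∫ t in α..β, (steklovMean (fun τ => w τ (X t)) h t - steklovMean (fun τ => w τ 0) h t) ^ 2 ≤
      b * dissipation s v h α β := by
  have hv := H.continuous_temp
  have hw := H.continuous_grad
  have hs := H.continuous_front
  rw [dissipation, ← intervalIntegral.integral_const_mul]
  refine intervalIntegral.integral_mono_on hαβ (Continuous.intervalIntegrable (by fun_prop) _ _)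
    (Continuous.intervalIntegrable (by fun_prop) _ _) fun t ht => ?_
  refine ((H.isPrimitiveOn_steklovMean_grad hh (hα.trans ht.1)).sq_sub_le (by fun_prop)
    (hXmem t ht)).trans (mul_le_mul_of_nonneg_right (hXb t ht) ?_)
  exact intervalIntegral.integral_nonneg (H.front_pos t).le fun _ _ => sq_nonneg _

lemma integral_sq_flux_le (H : IntegratedSol p t₀ s v w) (hp : 1 < p) {α β : ℝ}
    (hα : t₀ ≤ α) (hαβ : α ≤ β) {X : ℝ → ℝ} (hX : Continuous X) {b : ℝ}
    (hXmem : ∀ t ∈ Icc α β, X t ∈ Icc 0 (s t)) (hXb : ∀ t ∈ Icc α β, X t ≤ b) :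
    ∫ t in α..β, (w t (X t) - w t 0) ^ 2 ≤ b * (energy p s v α - energy p s v β) := by
  have hw := H.continuous_grad
  have hcont : Continuous fun h => ∫ t in α..β,
      (steklovMean (fun τ => w τ (X t)) h t - steklovMean (fun τ => w τ 0) h t) ^ 2 := by fun_prop
  have hflux := (hcont.continuousWithinAt (s := Ioi 0) (x := 0)).tendsto
  simp only [steklovMean_zero] at hflux
  have hle := le_of_tendsto_of_tendsto hflux ((H.tendsto_dissipation hp hα hαβ).const_mul b)
    (by filter_upwards [self_mem_nhdsWithin] with h hh using
      H.integral_sq_steklovMean_flux_le hh hα hαβ hX hXmem hXb)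
  have hb : 0 ≤ b := (hXmem α ⟨le_rfl, hαβ⟩).1.trans (hXb α ⟨le_rfl, hαβ⟩)
  refine hle.trans (mul_le_mul_of_nonneg_left ?_ hb)
  linarith [H.integral_grad_front_cube_nonpos hαβ]

lemma integral_abs_flux_le (H : IntegratedSol p t₀ s v w) (hp : 1 < p) {α β : ℝ}
    (hα : t₀ ≤ α) (hαβ : α ≤ β) {X : ℝ → ℝ} (hX : Continuous X) {b : ℝ}
    (hXmem : ∀ t ∈ Icc α β, X t ∈ Icc 0 (s t)) (hXb : ∀ t ∈ Icc α β, X t ≤ b) :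
    ∫ t in α..β, |w t (X t) - w t 0| ≤ √((β - α) * (b * (energy p s v α - energy p s v β))) := by
  have hw := H.continuous_grad
  have hcs := sq_integral_le (f := fun t => |w t (X t) - w t 0|) (by fun_prop) hαβ
  simp only [sq_abs] at hcs
  exact le_sqrt_of_sq_le (hcs.trans (mul_le_mul_of_nonneg_left
    (H.integral_sq_flux_le hp hα hαβ hX hXmem hXb) (sub_nonneg.2 hαβ)))

end FluxEstimate

end IntegratedSol

section Blowup

lemma exists_nonpos_of_hasDerivAt_le {y y' : ℝ → ℝ} {t₁ c : ℝ} (hc : 0 < c)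
    (hy : ∀ t, t₁ ≤ t → HasDerivAt y (y' t) t) (hle : ∀ t, t₁ ≤ t → y' t ≤ -c) :
    ∃ t, t₁ ≤ t ∧ y t ≤ 0 := by
  have hdecay : ∀ t, t₁ ≤ t → y t - y t₁ ≤ -c * (t - t₁) := fun t ht =>
    (convex_Ici t₁).image_sub_le_mul_sub_of_deriv_le
      (fun τ hτ => (hy τ hτ).continuousAt.continuousWithinAt)
      (fun τ hτ => (hy τ (interior_subset hτ)).differentiableAt.differentiableWithinAt)
      (fun τ hτ => (hy τ (interior_subset hτ)).deriv ▸ hle τ (interior_subset hτ))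
      t₁ self_mem_Ici t ht ht
  refine ⟨t₁ + |y t₁| / c, le_add_of_nonneg_right (by positivity), ?_⟩
  have hend := hdecay (t₁ + |y t₁| / c) (le_add_of_nonneg_right (by positivity))
  rw [add_sub_cancel_left, neg_mul, mul_div_cancel₀ _ hc.ne'] at hend
  linarith [le_abs_self (y t₁)]

lemma monotoneOn_mul_rpow_of_mul_sq_le {Φ M g : ℝ → ℝ} {t₁ k : ℝ}
    (hΦ : ∀ t, t₁ ≤ t → HasDerivAt Φ (M t) t) (hM : ∀ t, t₁ ≤ t → HasDerivAt M (g t) t)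
    (hpos : ∀ t, t₁ ≤ t → 0 < Φ t) (hg : ∀ t, t₁ ≤ t → (1 + k) * M t ^ 2 ≤ g t * Φ t) :
    MonotoneOn (fun t => M t * Φ t ^ (-(1 + k))) (Ici t₁) := by
  have hderiv : ∀ t, t₁ ≤ t → HasDerivAt (fun t => M t * Φ t ^ (-(1 + k)))
      (Φ t ^ (-(1 + k)) / Φ t * (g t * Φ t - (1 + k) * M t ^ 2)) t := by
    intro t ht
    have hΦt := (hpos t ht).ne'
    refine ((hM t ht).mul ((hΦ t ht).rpow_const (Or.inl hΦt))).congr_deriv ?_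
    rw [rpow_sub_one hΦt]
    field_simp
    ring
  refine monotoneOn_of_hasDerivWithinAt_nonneg (convex_Ici t₁)
    (fun t ht => (hderiv t ht).continuousAt.continuousWithinAt)
    (fun t ht => (hderiv t (interior_subset ht)).hasDerivWithinAt) fun t ht => ?_
  have hΦt := hpos t (interior_subset ht)
  exact mul_nonneg (by positivity) (sub_nonneg.2 (hg t (interior_subset ht)))

/- Where `Φ > 0`, the function `Φ ^ (-k)` is concave; as it decreases at `t₁`, it would have to
reach `0` in finite time. -/
lemma exists_nonpos_of_mul_sq_le {Φ M g : ℝ → ℝ} {t₁ k : ℝ} (hk : 0 < k)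
    (hΦ : ∀ t, t₁ ≤ t → HasDerivAt Φ (M t) t) (hM : ∀ t, t₁ ≤ t → HasDerivAt M (g t) t)
    (hMpos : 0 < M t₁) (hg : ∀ t, t₁ ≤ t → (1 + k) * M t ^ 2 ≤ g t * Φ t) :
    ∃ t, t₁ ≤ t ∧ Φ t ≤ 0 := by
  by_contra! hpos
  have hmono := monotoneOn_mul_rpow_of_mul_sq_le hΦ hM hpos hg
  have hderiv : ∀ t, t₁ ≤ t →
      HasDerivAt (fun t => Φ t ^ (-k)) (-k * (M t * Φ t ^ (-(1 + k)))) t := by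
    intro t ht
    refine ((hΦ t ht).rpow_const (Or.inl (hpos t ht).ne')).congr_deriv ?_
    rw [show -k - 1 = -(1 + k) by ring]
    ring
  have hrate : 0 < k * (M t₁ * Φ t₁ ^ (-(1 + k))) :=
    mul_pos hk (mul_pos hMpos (rpow_pos_of_pos (hpos t₁ le_rfl) _))
  obtain ⟨t, ht, hnonpos⟩ := exists_nonpos_of_hasDerivAt_le hrate hderiv fun t ht => by
    rw [neg_mul, neg_le_neg_iff]
    exact mul_le_mul_of_nonneg_left (hmono self_mem_Ici ht ht) hk.le
  exact (rpow_pos_of_pos (hpos t ht) _).not_ge hnonpos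

lemma add_mul_sub_le_of_le_deriv {f f' : ℝ → ℝ} {α c : ℝ} (hf : Continuous f)
    (hf' : ∀ t, α < t → HasDerivAt f (f' t) t) (hc : ∀ t, α < t → c ≤ f' t) {t : ℝ}
    (ht : α ≤ t) : f α + c * (t - α) ≤ f t := by
  have hmvt := (convex_Ici α).mul_sub_le_image_sub_of_le_deriv (C := c) hf.continuousOn
    (fun τ hτ => (hf' τ (by simpa using hτ)).differentiableAt.differentiableWithinAt)
    (fun τ hτ => by
      rw [interior_Ici] at hτ
      exact (hf' τ hτ).deriv ▸ hc τ hτ) α self_mem_Ici t ht ht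
  linarith

lemma false_of_levine_concavity {M g N : ℝ → ℝ} {α k c : ℝ} (hk : 0 < k) (hc : 0 < c)
    (hMc : Continuous M) (hMα : 0 ≤ M α) (hM : ∀ t, α < t → HasDerivAt M (g t) t)
    (hN : ∀ t, α < t → 0 ≤ N t) (hgN : ∀ t, α < t → c + 4 * (1 + 2 * k) * N t ≤ g t)
    (hMN : ∀ t, α < t → (M t - M α) ^ 2 ≤ 4 * (∫ τ in α..t, M τ) * N t) : False := by
  have hgrowth : ∀ t, α < t → M α + c * (t - α) ≤ M t := fun t ht =>
    add_mul_sub_le_of_le_deriv hMc hM (fun τ hτ => le_trans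
      (le_add_of_nonneg_right (mul_nonneg (by positivity) (hN τ hτ))) (hgN τ hτ)) ht.le
  have hMpos : ∀ t, α < t → 0 < M t := fun t ht =>
    (add_pos_of_nonneg_of_pos hMα (mul_pos hc (sub_pos.2 ht))).trans_le (hgrowth t ht)
  have hΦpos : ∀ t, α < t → 0 < ∫ τ in α..t, M τ := fun t ht =>
    intervalIntegral.intervalIntegral_pos_of_pos_on (hMc.intervalIntegrable _ _)
      (fun τ hτ => hMpos τ hτ.1) ht
  have hMtop : Tendsto M atTop atTop := by
    refine tendsto_atTop_mono' atTop ((eventually_gt_atTop α).mono hgrowth) ?_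
    exact tendsto_atTop_add_const_left _ _
      ((tendsto_atTop_add_const_right _ (-α) tendsto_id).const_mul_atTop hc)
  obtain ⟨t₁, hlarge⟩ := ((hMtop.eventually_ge_atTop (2 * (1 + 2 * k) * M α / k)).and
    (eventually_gt_atTop α)).exists_forall_of_atTop
  obtain ⟨t, ht, hnonpos⟩ := exists_nonpos_of_mul_sq_le hk
    (fun t _ => (hMc.integral_hasStrictDerivAt α t).hasDerivAt)
    (fun t ht => hM t (hlarge t ht).2) (hMpos t₁ (hlarge t₁ le_rfl).2) fun t ht => by
      obtain ⟨hMt, hαt⟩ := hlarge t ht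
      rw [div_le_iff₀ hk] at hMt
      calc (1 + k) * M t ^ 2 ≤ (1 + 2 * k) * (M t - M α) ^ 2 := by
            nlinarith [mul_nonneg hMα hMα, mul_le_mul_of_nonneg_left hMt (hMpos t hαt).le]
        _ ≤ (1 + 2 * k) * (4 * (∫ τ in α..t, M τ) * N t) := by gcongr; exact hMN t hαt
        _ = 4 * (1 + 2 * k) * N t * ∫ τ in α..t, M τ := by ring
        _ ≤ g t * ∫ τ in α..t, M τ :=
            mul_le_mul_of_nonneg_right (by linarith [hgN t hαt]) (hΦpos t hαt).le
  exact (hΦpos t (hlarge t ht).2).not_ge hnonpos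

end Blowup

/-- The squared `L²` norm of `v t` over `(0, s t)`. -/
def sqMass (s : ℝ → ℝ) (v : ℝ → ℝ → ℝ) (t : ℝ) : ℝ := ∫ x in (0:ℝ)..s t, v t x ^ 2

/-- The time derivative of `sqMass s v` along a solution with space derivative `w`. -/
def sqMassRate (p : ℝ) (s : ℝ → ℝ) (v w : ℝ → ℝ → ℝ) (t : ℝ) : ℝ :=
  2 * (v t 0 ^ (p + 1) - ∫ x in (0:ℝ)..s t, w t x ^ 2)

namespace IntegratedSol

variable {p t₀ : ℝ} {s : ℝ → ℝ} {v w : ℝ → ℝ → ℝ}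

section Levine

lemma continuous_sqMass (H : IntegratedSol p t₀ s v w) : Continuous (sqMass s v) := by
  have hv := H.continuous_temp
  have hs := H.continuous_front
  unfold sqMass
  fun_prop

lemma continuous_sqMassRate (H : IntegratedSol p t₀ s v w) (hp : 1 < p) :
    Continuous (sqMassRate p s v w) := by
  have hv := H.continuous_temp
  have hw := H.continuous_grad
  have hs := H.continuous_front
  have hpow : Continuous fun t => v t 0 ^ (p + 1) :=
    (continuous_rpow_const (by linarith)).comp (by fun_prop : Continuous fun t => v t 0)
  unfold sqMassRate
  fun_prop

lemma sqMass_sub_eq_integral (H : IntegratedSol p t₀ s v w) (hp : 1 < p) {α β : ℝ} (hα : t₀ ≤ α)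
    (hαβ : α ≤ β) : sqMass s v β - sqMass s v α = ∫ t in α..β, sqMassRate p s v w t := by
  have hv := H.continuous_temp
  have hw := H.continuous_grad
  have hs := H.continuous_front
  have hleft : Continuous fun h =>
      (∫ x in (0:ℝ)..s β, steklovMean (fun τ => v τ x) h β ^ 2) -
        ∫ x in (0:ℝ)..s α, steklovMean (fun τ => v τ x) h α ^ 2 := by fun_prop
  have hright : Continuous fun h => ∫ t in α..β,
      (-w t (s t) * steklovMean (fun τ => v τ (s t)) h t ^ 2 +
        2 * (steklovMean (fun τ => v τ (s t)) h t * steklovMean (fun τ => w τ (s t)) h t -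
          steklovMean (fun τ => v τ 0) h t * steklovMean (fun τ => w τ 0) h t -
          ∫ x in (0:ℝ)..s t, steklovMean (fun τ => w τ x) h t ^ 2)) := by fun_prop
  have hlim := tendsto_nhds_unique
    ((hleft.continuousWithinAt (s := Ioi 0) (x := 0)).tendsto.congr' ?_)
    (hright.continuousWithinAt (s := Ioi 0) (x := 0)).tendsto
  · simp only [steklovMean_zero, H.temp_front, H.grad_zero] at hlim
    rw [sqMass, sqMass, hlim]
    refine intervalIntegral.integral_congr fun t _ => ?_
    simp only [sqMassRate, rpow_add_one' (H.temp_nonneg t 0) (by linarith : p + 1 ≠ 0)]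
    ring
  · filter_upwards [self_mem_nhdsWithin] with h (hh : 0 < h)
    rw [H.integral_sq_steklovMean_sub hv hh.ne' hα hαβ]
    refine intervalIntegral.integral_congr fun t ht => ?_
    rw [uIcc_of_le hαβ] at ht
    simp only [H.integral_steklovMean_temp_mul_diffQuot hh (hα.trans ht.1)]

lemma hasDerivAt_sqMass (H : IntegratedSol p t₀ s v w) (hp : 1 < p) {t : ℝ} (ht : t₀ < t) :
    HasDerivAt (sqMass s v) (sqMassRate p s v w t) t := by
  refine (((H.continuous_sqMassRate hp).integral_hasStrictDerivAt t₀ t).hasDerivAt.const_add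
    (sqMass s v t₀)).congr_of_eventuallyEq ?_
  filter_upwards [Ioi_mem_nhds ht] with τ hτ
  linarith [H.sqMass_sub_eq_integral hp le_rfl (le_of_lt hτ)]

lemma neg_energy_le_sqMassRate (H : IntegratedSol p t₀ s v w) (hp : 1 < p) (t : ℝ) :
    -(2 * (p + 1) * energy p s v t) ≤ sqMassRate p s v w t := by
  have hint : 0 ≤ ∫ x in (0:ℝ)..s t, w t x ^ 2 :=
    intervalIntegral.integral_nonneg (H.front_pos t).le fun _ _ => sq_nonneg _
  have hdiv : (p + 1) * (v t 0 ^ (p + 1) / (p + 1)) = v t 0 ^ (p + 1) :=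
    mul_div_cancel₀ _ (by linarith)
  rw [H.energy_eq, sqMassRate]
  nlinarith

lemma sqMass_nonneg (H : IntegratedSol p t₀ s v w) (t : ℝ) : 0 ≤ sqMass s v t :=
  intervalIntegral.integral_nonneg (H.front_pos t).le fun _ _ => sq_nonneg _

lemma integral_integral_sq_sub_diffQuot (H : IntegratedSol p t₀ s v w) {h α β : ℝ} (hh : 0 < h)
    (hα : t₀ ≤ α) (hαβ : α ≤ β) (l : ℝ) :
    ∫ t in α..β, ∫ x in (0:ℝ)..s t,
        (l * steklovMean (fun τ => v τ x) h t - diffQuot (fun τ => v τ x) h t) ^ 2 =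
      l ^ 2 * (∫ t in α..β, ∫ x in (0:ℝ)..s t, steklovMean (fun τ => v τ x) h t ^ 2) -
        l * ((∫ x in (0:ℝ)..s β, steklovMean (fun τ => v τ x) h β ^ 2) -
          (∫ x in (0:ℝ)..s α, steklovMean (fun τ => v τ x) h α ^ 2) +
          ∫ t in α..β, w t (s t) * steklovMean (fun τ => v τ (s t)) h t ^ 2) +
        dissipation s v h α β := by
  have hv := H.continuous_temp
  have hw := H.continuous_grad
  have hs := H.continuous_front
  have hexpand : ∀ t, ∫ x in (0:ℝ)..s t,
      (l * steklovMean (fun τ => v τ x) h t - diffQuot (fun τ => v τ x) h t) ^ 2 =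
      l ^ 2 * (∫ x in (0:ℝ)..s t, steklovMean (fun τ => v τ x) h t ^ 2) - 2 * l *
        (∫ x in (0:ℝ)..s t, steklovMean (fun τ => v τ x) h t * diffQuot (fun τ => v τ x) h t) +
        ∫ x in (0:ℝ)..s t, diffQuot (fun τ => v τ x) h t ^ 2 := by
    intro t
    rw [← intervalIntegral.integral_const_mul, ← intervalIntegral.integral_const_mul,
      ← intervalIntegral.integral_sub, ← intervalIntegral.integral_add]
    · exact intervalIntegral.integral_congr fun x _ => by ring
    all_goals exact Continuous.intervalIntegrable (by fun_prop) _ _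
  have hcross := H.integral_sq_steklovMean_sub hv hh.ne' hα hαβ
  simp only [neg_mul] at hcross
  rw [intervalIntegral.integral_add, intervalIntegral.integral_neg,
    intervalIntegral.integral_const_mul] at hcross
  · simp only [hexpand]
    rw [intervalIntegral.integral_add, intervalIntegral.integral_sub,
      intervalIntegral.integral_const_mul, intervalIntegral.integral_const_mul, hcross, dissipation]
    · ring
    all_goals exact Continuous.intervalIntegrable (by fun_prop) _ _
  all_goals exact Continuous.intervalIntegrable (by fun_prop) _ _

lemma sq_sqMass_sub_le (H : IntegratedSol p t₀ s v w) (hp : 1 < p) {α β : ℝ} (hα : t₀ ≤ α)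
    (hαβ : α ≤ β) :
    (sqMass s v β - sqMass s v α) ^ 2 ≤
      4 * (∫ t in α..β, sqMass s v t) * (energy p s v α - energy p s v β) := by
  have hv := H.continuous_temp
  have hw := H.continuous_grad
  have hs := H.continuous_front
  have hquad : ∀ l : ℝ, 0 ≤ (∫ t in α..β, sqMass s v t) * (l * l) +
      -(sqMass s v β - sqMass s v α) * l + (energy p s v α - energy p s v β) := by
    intro l
    have hcont : Continuous fun h =>
      l ^ 2 * (∫ t in α..β, ∫ x in (0:ℝ)..s t, steklovMean (fun τ => v τ x) h t ^ 2) -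
        l * ((∫ x in (0:ℝ)..s β, steklovMean (fun τ => v τ x) h β ^ 2) -
          (∫ x in (0:ℝ)..s α, steklovMean (fun τ => v τ x) h α ^ 2) +
          ∫ t in α..β, w t (s t) * steklovMean (fun τ => v τ (s t)) h t ^ 2) := by fun_prop
    have hlim := ge_of_tendsto ((hcont.continuousWithinAt (s := Ioi 0) (x := 0)).tendsto.add
      (H.tendsto_dissipation hp hα hαβ)) (b := 0) (by
        filter_upwards [self_mem_nhdsWithin] with h hh
        rw [← H.integral_integral_sq_sub_diffQuot hh hα hαβ l]
        exact intervalIntegral.integral_nonneg hαβ fun t _ =>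
          intervalIntegral.integral_nonneg (H.front_pos t).le fun _ _ => sq_nonneg _)
    simp only [steklovMean_zero, H.temp_front, ne_eq, OfNat.ofNat_ne_zero, not_false_eq_true,
      zero_pow, mul_zero, intervalIntegral.integral_zero, add_zero] at hlim
    unfold sqMass
    linarith [H.integral_grad_front_cube_nonpos hαβ]
  have hdisc := discrim_le_zero hquad
  rw [discrim, neg_sq] at hdisc
  linarith

lemma energy_nonneg (H : IntegratedSol p t₀ s v w) (hp : 1 < p) {α : ℝ} (hα : t₀ ≤ α) :
    0 ≤ energy p s v α := by
  by_contra! hneg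
  refine false_of_levine_concavity (M := sqMass s v) (g := sqMassRate p s v w) (α := α)
    (k := (p - 1) / 4) (N := fun t => energy p s v α - energy p s v t)
    (c := -(2 * (p + 1) * energy p s v α)) (by linarith) (by nlinarith)
    H.continuous_sqMass (H.sqMass_nonneg α)
    (fun t ht => H.hasDerivAt_sqMass hp (hα.trans_lt ht))
    (fun t ht => sub_nonneg.2 (H.energy_le_energy hp hα ht.le)) (fun t _ => ?_)
    (fun t ht => H.sq_sqMass_sub_le hp hα ht.le)
  refine le_of_eq_of_le ?_ (H.neg_energy_le_sqMassRate hp t)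
  ring

end Levine

end IntegratedSol

lemma eventually_forall_sub_le_of_monotoneOn {f : ℝ → ℝ} {t₀ η : ℝ} (hf : MonotoneOn f (Ici t₀))
    (hbdd : BddAbove (f '' Ici t₀)) (hη : 0 < η) :
    ∀ᶠ a in atTop, ∀ b, a ≤ b → f b - f a ≤ η := by
  obtain ⟨_, ⟨T, hT, rfl⟩, hlt⟩ := exists_lt_of_lt_csSup (nonempty_Ici.image f)
    (sub_lt_self (sSup (f '' Ici t₀)) hη)
  filter_upwards [eventually_ge_atTop T] with a ha b hab
  have ht₀a : t₀ ≤ a := le_trans hT ha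
  have hmono : f T ≤ f a := hf hT ht₀a ha
  have hsup : f b ≤ sSup (f '' Ici t₀) := le_csSup hbdd (mem_image_of_mem f (ht₀a.trans hab))
  linarith

lemma mul_rpow_sub_one_le_rpow {a ε p : ℝ} (hp : 1 < p) (hε : 0 < ε) (ha : ε ≤ a) :
    a * ε ^ (p - 1) ≤ a ^ p := by
  have hapos : 0 < a := hε.trans_le ha
  calc a * ε ^ (p - 1) ≤ a * a ^ (p - 1) := by gcongr
    _ = a ^ p := by rw [← rpow_one_add' hapos.le (by linarith), add_sub_cancel]

namespace IntegratedSol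

variable {p t₀ : ℝ} {s : ℝ → ℝ} {v w : ℝ → ℝ → ℝ}

section TraceDecay

lemma eventually_integral_abs_flux_le (H : IntegratedSol p t₀ s v w) (hp : 1 < p) {b δ : ℝ}
    (hb : 0 < b) (hδ : 0 < δ) :
    ∀ᶠ α in atTop, ∀ β ∈ Icc α (α + 1), ∀ X : ℝ → ℝ, Continuous X →
      (∀ t ∈ Icc α β, X t ∈ Icc 0 (s t)) → (∀ t ∈ Icc α β, X t ≤ b) →
      ∫ t in α..β, |w t (X t) - w t 0| ≤ δ := by
  have hsmall : ∀ᶠ α in atTop, ∀ β, α ≤ β →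
      -energy p s v β - -energy p s v α ≤ δ ^ 2 / b := by
    refine eventually_forall_sub_le_of_monotoneOn (t₀ := t₀)
      (fun α hα β _ hαβ => neg_le_neg (H.energy_le_energy hp hα hαβ)) ⟨0, ?_⟩ (by positivity)
    rintro _ ⟨α, hα, rfl⟩
    exact neg_nonpos.2 (H.energy_nonneg hp hα)
  filter_upwards [hsmall, eventually_ge_atTop t₀] with α hα ht₀ β hβ X hX hXmem hXb
  refine (H.integral_abs_flux_le hp ht₀ hβ.1 hX hXmem hXb).trans ((sqrt_le_left hδ.le).2 ?_)
  have hdrop := hα β hβ.1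
  rw [le_div_iff₀ hb] at hdrop
  have hdrop_nonneg : 0 ≤ b * (energy p s v α - energy p s v β) :=
    mul_nonneg hb.le (sub_nonneg.2 (H.energy_le_energy hp ht₀ hβ.1))
  calc (β - α) * (b * (energy p s v α - energy p s v β))
      ≤ 1 * (b * (energy p s v α - energy p s v β)) :=
        mul_le_mul_of_nonneg_right (by linarith [hβ.2]) hdrop_nonneg
    _ ≤ δ ^ 2 := by linarith

lemma mul_rpow_sub_le_integral_flux (H : IntegratedSol p t₀ s v w) {t x : ℝ}
    (hx : x ∈ Icc 0 (s t)) : x * v t 0 ^ p - v t 0 ≤ ∫ y in (0:ℝ)..x, (w t y - w t 0) := by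
  have hw := H.continuous_grad
  have hprim := H.isPrimitiveOn_temp t x hx
  rw [intervalIntegral.integral_sub, intervalIntegral.integral_const, H.grad_zero, smul_eq_mul]
  · linarith [H.temp_nonneg t x]
  all_goals exact Continuous.intervalIntegrable (by fun_prop) _ _

lemma eventually_exists_trace_lt_of_tendsto_front (H : IntegratedSol p t₀ s v w) (hp : 1 < p)
    (hs : Tendsto s atTop atTop) {ε : ℝ} (hε : 0 < ε) :
    ∀ᶠ t in atTop, ∃ r ∈ Icc t (t + 1), v r 0 < ε := by
  have hw := H.continuous_grad
  set x := 2 / ε ^ (p - 1) with hxdef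
  have hx : 0 < x := by positivity
  filter_upwards [hs.eventually_ge_atTop x, H.eventually_integral_abs_flux_le hp hx
    (by positivity : 0 < ε / (2 * x))] with t hxt hflux
  by_contra! hlarge
  have htt : t ≤ t + 1 := by linarith
  have hxs : ∀ r ∈ Icc t (t + 1), ∀ y ∈ Icc 0 x, y ∈ Icc 0 (s r) := fun r hr y hy =>
    ⟨hy.1, (hy.2.trans hxt).trans (H.monotone_front hr.1)⟩
  have hlower : ∀ r ∈ Icc t (t + 1), ε ≤ ∫ y in (0:ℝ)..x, (w r y - w r 0) := by
    intro r hr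
    have hsuper : 2 * v r 0 ≤ x * v r 0 ^ p := by
      rw [hxdef, div_mul_eq_mul_div, le_div_iff₀ (by positivity), mul_assoc]
      exact mul_le_mul_of_nonneg_left (mul_rpow_sub_one_le_rpow hp hε (hlarge r hr)) two_pos.le
    linarith [hlarge r hr, H.mul_rpow_sub_le_integral_flux (hxs r hr x ⟨hx.le, le_rfl⟩)]
  have hupper : ∀ y ∈ Icc 0 x, ∫ r in t..(t + 1), (w r y - w r 0) ≤ ε / (2 * x) := fun y hy =>
    (le_abs_self _).trans ((intervalIntegral.abs_integral_le_integral_abs htt).trans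
      (hflux (t + 1) ⟨htt, le_rfl⟩ (fun _ => y) continuous_const (fun r hr => hxs r hr y hy)
        fun _ _ => hy.2))
  have hcontra : ε ≤ ε / 2 := calc
    ε = ∫ _ in t..(t + 1), ε := by simp
    _ ≤ ∫ r in t..(t + 1), ∫ y in (0:ℝ)..x, (w r y - w r 0) :=
      intervalIntegral.integral_mono_on htt (by simp)
        (Continuous.intervalIntegrable (by fun_prop) _ _) hlower
    _ = ∫ y in (0:ℝ)..x, ∫ r in t..(t + 1), (w r y - w r 0) :=
      integral_integral_swap_of_continuous (by fun_prop) _ _ _ _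
    _ ≤ ∫ _ in (0:ℝ)..x, ε / (2 * x) :=
      intervalIntegral.integral_mono_on hx.le (Continuous.intervalIntegrable (by fun_prop) _ _)
        (by simp) hupper
    _ = ε / 2 := by simp; field_simp
  linarith

lemma eventually_exists_trace_lt_of_bddAbove_front (H : IntegratedSol p t₀ s v w) (hp : 1 < p)
    (hs : BddAbove (range s)) {ε : ℝ} (hε : 0 < ε) :
    ∀ᶠ t in atTop, ∃ r ∈ Icc t (t + 1), v r 0 < ε := by
  have hw := H.continuous_grad
  have hsc := H.continuous_front
  obtain ⟨L, hL⟩ := hs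
  have hsL : ∀ t, s t ≤ L := fun t => hL (mem_range_self t)
  have hδ : 0 < ε ^ p / 4 := by positivity
  filter_upwards [H.eventually_integral_abs_flux_le hp ((H.front_pos 0).trans_le (hsL 0)) hδ,
    eventually_forall_sub_le_of_monotoneOn (H.monotone_front.monotoneOn (Ici t₀))
      ⟨L, forall_mem_image.2 fun t _ => hsL t⟩ hδ, eventually_ge_atTop t₀] with t hflux hfront ht
  by_contra! hlarge
  have htt : t ≤ t + 1 := by linarith
  have hupper : (∫ r in t..(t + 1), w r (s r)) - ∫ r in t..(t + 1), w r 0 ≤ ε ^ p / 4 := by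
    rw [← intervalIntegral.integral_sub]
    · exact (le_abs_self _).trans ((intervalIntegral.abs_integral_le_integral_abs htt).trans
        (hflux (t + 1) ⟨htt, le_rfl⟩ s hsc (fun r _ => ⟨(H.front_pos r).le, le_rfl⟩)
          fun r _ => hsL r))
    all_goals exact Continuous.intervalIntegrable (by fun_prop) _ _
  have hlower : ∫ _ in t..(t + 1), ε ^ p ≤ ∫ r in t..(t + 1), -w r 0 := by
    refine intervalIntegral.integral_mono_on htt (by simp)
      (Continuous.intervalIntegrable (by fun_prop) _ _) fun r hr => ?_
    rw [H.grad_zero, neg_neg]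
    exact rpow_le_rpow hε.le (hlarge r hr) (by linarith)
  rw [H.integral_grad_front ht htt] at hupper
  simp only [intervalIntegral.integral_const, add_sub_cancel_left, one_smul,
    intervalIntegral.integral_neg] at hlower
  linarith [hfront (t + 1) htt]

lemma eventually_exists_trace_lt (H : IntegratedSol p t₀ s v w) (hp : 1 < p) {ε : ℝ}
    (hε : 0 < ε) : ∀ᶠ t in atTop, ∃ r ∈ Icc t (t + 1), v r 0 < ε := by
  by_cases hs : BddAbove (range s)
  · exact H.eventually_exists_trace_lt_of_bddAbove_front hp hs hε
  · exact H.eventually_exists_trace_lt_of_tendsto_front hp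
      (tendsto_atTop_atTop_of_monotone' H.monotone_front hs) hε

lemma integral_sq_grad_le (H : IntegratedSol p t₀ s v w) (hp : 1 < p) {t a : ℝ} (ht : t₀ ≤ t)
    (ha : v t 0 ≤ a) :
    ∫ x in (0:ℝ)..s t, w t x ^ 2 ≤ 2 * (energy p s v t₀ + a ^ (p + 1)) := by
  have hpow : v t 0 ^ (p + 1) / (p + 1) ≤ a ^ (p + 1) :=
    (div_le_self (rpow_nonneg (H.temp_nonneg t 0) _) (by linarith)).trans
      (rpow_le_rpow (H.temp_nonneg t 0) ha (by linarith))
  have henergy := H.energy_le_energy hp le_rfl ht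
  rw [H.energy_eq t] at henergy
  linarith

lemma exists_forall_abs_temp_sub_trace_le (H : IntegratedSol p t₀ s v w) (hp : 1 < p) {a δ : ℝ}
    (ha : 0 < a) (hδ : 0 < δ) :
    ∃ l ∈ Ioc 0 (s t₀), ∀ t, t₀ ≤ t → v t 0 ≤ a → ∀ y ∈ Icc 0 l, |v t y - v t 0| ≤ δ := by
  have hw := H.continuous_grad
  set C := 2 * (energy p s v t₀ + a ^ (p + 1))
  have hC : 0 < C :=
    mul_pos two_pos (add_pos_of_nonneg_of_pos (H.energy_nonneg hp le_rfl) (rpow_pos_of_pos ha _))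
  refine ⟨min (s t₀) (δ ^ 2 / C), ⟨lt_min (H.front_pos t₀) (by positivity), min_le_left _ _⟩,
    fun t ht hta y hy => abs_le_of_sq_le_sq ?_ hδ.le⟩
  have hyt : y ∈ Icc 0 (s t) :=
    ⟨hy.1, (hy.2.trans (min_le_left _ _)).trans (H.monotone_front ht)⟩
  calc (v t y - v t 0) ^ 2 ≤ y * ∫ x in (0:ℝ)..s t, w t x ^ 2 :=
        (H.isPrimitiveOn_temp t).sq_sub_le (by fun_prop) hyt
    _ ≤ y * C := mul_le_mul_of_nonneg_left (H.integral_sq_grad_le hp ht hta) hy.1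
    _ ≤ δ ^ 2 := (le_div_iff₀ hC).1 (hy.2.trans (min_le_right _ _))

lemma eventually_trace_sub_lt (H : IntegratedSol p t₀ s v w) (hp : 1 < p) {a ε : ℝ} (ha : 0 < a)
    (hε : 0 < ε) :
    ∀ᶠ α in atTop, ∀ β ∈ Icc α (α + 1), v α 0 ≤ a → v β 0 ≤ a → v β 0 - v α 0 < ε := by
  have hv := H.continuous_temp
  have hδ : 0 < ε / 4 := by positivity
  obtain ⟨l, ⟨hl, hls⟩, hlayer⟩ := H.exists_forall_abs_temp_sub_trace_le hp ha hδ
  filter_upwards [H.eventually_integral_abs_flux_le hp hl (mul_pos hl hδ), eventually_ge_atTop t₀]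
    with α hflux hα β hβ hvα hvβ
  have hmem : ∀ t ∈ Icc α β, l ∈ Icc 0 (s t) := fun t ht =>
    ⟨hl.le, hls.trans (H.monotone_front (hα.trans ht.1))⟩
  have hupper : ∫ y in (0:ℝ)..l, (v β y - v α y) ≤ l * (ε / 4) := by
    rw [H.heat α β l hα hβ.1 (hmem α ⟨le_rfl, hβ.1⟩)]
    exact (le_abs_self _).trans ((intervalIntegral.abs_integral_le_integral_abs hβ.1).trans
      (hflux β hβ (fun _ => l) continuous_const hmem fun _ _ => le_rfl))
  have hlower : ∫ _ in (0:ℝ)..l, (v β 0 - v α 0 - ε / 2) ≤ ∫ y in (0:ℝ)..l, (v β y - v α y) := by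
    refine intervalIntegral.integral_mono_on hl.le (by simp)
      (Continuous.intervalIntegrable (by fun_prop) _ _) fun y hy => ?_
    linarith [(abs_le.1 (hlayer α hα hvα y hy)).2, (abs_le.1 (hlayer β (hα.trans hβ.1) hvβ y hy)).1]
  rw [intervalIntegral.integral_const, sub_zero, smul_eq_mul] at hlower
  linarith [le_of_mul_le_mul_left (hlower.trans hupper) hl]

/- Each unit time window contains a time where the trace is below `ε`, and the trace gains less than
`ε` within one time unit. -/
lemma tendsto_trace (H : IntegratedSol p t₀ s v w) (hp : 1 < p) :
    Tendsto (fun t => v t 0) atTop (𝓝 0) := by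
  have hv := H.continuous_temp
  have hsmall : ∀ ε > 0, ∀ᶠ t in atTop, v t 0 ≤ 2 * ε := by
    intro ε hε
    have hgood := (H.eventually_exists_trace_lt hp hε).and (eventually_forall_ge_atTop.2
      (H.eventually_trace_sub_lt hp (mul_pos two_pos hε) hε))
    filter_upwards [(tendsto_atTop_add_const_right atTop (-1) tendsto_id).eventually hgood]
      with t ⟨⟨α, hα, hvα⟩, hgain⟩
    simp only [id, neg_add_cancel_right] at hα hgain
    by_contra! hvt
    obtain ⟨β, hβ, hvβ⟩ := intermediate_value_Icc hα.2
      (by fun_prop : Continuous fun t => v t 0).continuousOn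
      (⟨by linarith, hvt.le⟩ : 2 * ε ∈ Icc (v α 0) (v t 0))
    have hβα : β ∈ Icc α (α + 1) := ⟨hβ.1, by linarith [hβ.2, hα.1]⟩
    linarith [hgain α hα.1 β hβα (by linarith) hvβ.le]
  refine tendsto_order.2 ⟨fun a ha => Eventually.of_forall fun t => ha.trans_le (H.temp_nonneg t 0),
    fun a ha => ?_⟩
  filter_upwards [hsmall (a / 4) (by linarith)] with t ht
  linarith

end TraceDecay

end IntegratedSol

namespace IsGlobalSol

variable {p s₀ : ℝ} {φ s : ℝ → ℝ} {u : ℝ → ℝ → ℝ}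

section Regularity

lemma continuousOn_of_forall_Ioc {f : ℝ × ℝ → ℝ} {A : ℝ → Set ℝ}
    (h : ∀ T, 0 < T → ContinuousOn f {q : ℝ × ℝ | q.1 ∈ Ioc 0 T ∧ q.2 ∈ A q.1}) :
    ContinuousOn f {q : ℝ × ℝ | 0 < q.1 ∧ q.2 ∈ A q.1} := by
  intro q hq
  have hq0 : 0 < q.1 := hq.1
  refine (h (q.1 + 1) (by linarith) q ⟨⟨hq0, by linarith⟩, hq.2⟩).mono_of_mem_nhdsWithin ?_
  have hlt : {r : ℝ × ℝ | r.1 < q.1 + 1} ∈ 𝓝 q :=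
    (isOpen_lt continuous_fst continuous_const).mem_nhds (by simp)
  filter_upwards [mem_nhdsWithin_of_mem_nhds hlt, self_mem_nhdsWithin] with r hr hrA
  exact ⟨⟨hrA.1, le_of_lt hr⟩, hrA.2⟩

lemma continuousOn_temp (H : IsGlobalSol p s₀ φ s u) :
    ContinuousOn (Function.uncurry u) {q : ℝ × ℝ | 0 < q.1 ∧ q.2 ∈ Icc 0 (s q.1)} :=
  continuousOn_of_forall_Ioc (A := fun t => Icc 0 (s t)) fun T hT =>
    (H T hT).u_cont.mono fun _ hq => ⟨Ioc_subset_Icc_self hq.1, hq.2⟩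

lemma continuousOn_grad (H : IsGlobalSol p s₀ φ s u) :
    ContinuousOn (Function.uncurry fun t => deriv (u t))
      {q : ℝ × ℝ | 0 < q.1 ∧ q.2 ∈ Icc 0 (s q.1)} :=
  continuousOn_of_forall_Ioc (A := fun t => Icc 0 (s t)) fun T hT => (H T hT).ux_cont

lemma continuousOn_deriv_grad (H : IsGlobalSol p s₀ φ s u) :
    ContinuousOn (Function.uncurry fun t => deriv (deriv (u t)))
      {q : ℝ × ℝ | 0 < q.1 ∧ q.2 ∈ Ioo 0 (s q.1)} :=
  continuousOn_of_forall_Ioc (A := fun t => Ioo 0 (s t)) fun T hT => (H T hT).uxx_cont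

variable {t x : ℝ}

lemma continuousOn_temp_slice (H : IsGlobalSol p s₀ φ s u) (ht : 0 < t) :
    ContinuousOn (u t) (Icc 0 (s t)) :=
  H.continuousOn_temp.comp (f := fun x => (t, x)) (by fun_prop) fun _ hx => ⟨ht, hx⟩

lemma continuousOn_grad_slice (H : IsGlobalSol p s₀ φ s u) (ht : 0 < t) :
    ContinuousOn (deriv (u t)) (Icc 0 (s t)) :=
  H.continuousOn_grad.comp (f := fun x => (t, x)) (by fun_prop) fun _ hx => ⟨ht, hx⟩

lemma front_pos (H : IsGlobalSol p s₀ φ s u) (ht : 0 < t) : 0 < s t :=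
  (H t ht).s_pos t ⟨ht.le, le_rfl⟩

lemma temp_nonneg (H : IsGlobalSol p s₀ φ s u) (ht : 0 < t) (hx : x ∈ Icc 0 (s t)) : 0 ≤ u t x :=
  (H t ht).u_nonneg t ⟨ht.le, le_rfl⟩ x hx

lemma temp_front (H : IsGlobalSol p s₀ φ s u) (ht : 0 < t) : u t (s t) = 0 :=
  (H t ht).bc_free t ⟨ht, le_rfl⟩

lemma grad_zero (H : IsGlobalSol p s₀ φ s u) (ht : 0 < t) : deriv (u t) 0 = -u t 0 ^ p := by
  rw [← (H t ht).bc_zero t ⟨ht, le_rfl⟩, neg_neg]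

lemma hasDerivAt_front (H : IsGlobalSol p s₀ φ s u) (ht : 0 < t) :
    HasDerivAt s (-deriv (u t) (s t)) t := by
  rw [← (H t ht).stefan t ⟨ht, le_rfl⟩]
  exact ((H t ht).s_diff t ⟨ht, le_rfl⟩).hasDerivAt

lemma continuousOn_front (H : IsGlobalSol p s₀ φ s u) : ContinuousOn s (Ioi 0) :=
  fun _ ht => (H.hasDerivAt_front ht).continuousAt.continuousWithinAt

lemma hasDerivAt_temp (H : IsGlobalSol p s₀ φ s u) (ht : 0 < t) (hx : x ∈ Ioo 0 (s t)) :
    HasDerivAt (u t) (deriv (u t) x) x :=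
  ((H t ht).ux_diff t ⟨ht, le_rfl⟩ x hx).hasDerivAt

lemma hasDerivAt_grad (H : IsGlobalSol p s₀ φ s u) (ht : 0 < t) (hx : x ∈ Ioo 0 (s t)) :
    HasDerivAt (deriv (u t)) (deriv (deriv (u t)) x) x :=
  ((H t ht).uxx_diff t ⟨ht, le_rfl⟩ x hx).hasDerivAt

lemma hasDerivAt_temp_time (H : IsGlobalSol p s₀ φ s u) (ht : 0 < t) (hx : x ∈ Ioo 0 (s t)) :
    HasDerivAt (fun τ => u τ x) (deriv (deriv (u t)) x) t := by
  rw [← (H t ht).heat t ⟨ht, le_rfl⟩ x hx]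
  exact ((H t ht).ut_diff t ⟨ht, le_rfl⟩ x hx).hasDerivAt

end Regularity

section FrontMonotonicity

variable {t : ℝ}

lemma exists_grad_nonpos (H : IsGlobalSol p s₀ φ s u) (ht : 0 < t) {x : ℝ} (hx : 0 ≤ x)
    (hxs : x < s t) : ∃ y ∈ Ioo x (s t), deriv (u t) y ≤ 0 := by
  obtain ⟨y, hy, hslope⟩ := exists_deriv_eq_slope (u t) hxs
    ((H.continuousOn_temp_slice ht).mono (Icc_subset_Icc_left hx)) fun y hy =>
      (H.hasDerivAt_temp ht ⟨hx.trans_lt hy.1, hy.2⟩).differentiableAt.differentiableWithinAt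
  refine ⟨y, hy, ?_⟩
  rw [hslope, H.temp_front ht]
  exact div_nonpos_of_nonpos_of_nonneg (by linarith [H.temp_nonneg ht ⟨hx, hxs.le⟩])
    (by linarith)

lemma grad_front_nonpos (H : IsGlobalSol p s₀ φ s u) (ht : 0 < t) : deriv (u t) (s t) ≤ 0 := by
  have hs := H.front_pos ht
  have hcont : ContinuousWithinAt (deriv (u t)) (Iio (s t)) (s t) :=
    (H.continuousOn_grad_slice ht (s t) (right_mem_Icc.2 hs.le)).mono_of_mem_nhdsWithin
      (mem_of_superset (Ioo_mem_nhdsLT hs) Ioo_subset_Icc_self)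
  refine le_of_tendsto_of_frequently hcont.tendsto ?_
  rw [(nhdsLT_basis_of_exists_lt ⟨0, hs⟩).frequently_iff]
  intro x hx
  obtain ⟨y, hy, hgrad⟩ := H.exists_grad_nonpos ht (le_max_left 0 x) (max_lt hs hx)
  exact ⟨y, ⟨(le_max_right 0 x).trans_lt hy.1, hy.2⟩, hgrad⟩

lemma monotoneOn_front (H : IsGlobalSol p s₀ φ s u) : MonotoneOn s (Ioi 0) := by
  refine monotoneOn_of_hasDerivWithinAt_nonneg (convex_Ioi 0) H.continuousOn_front
    (f' := fun t => -deriv (u t) (s t)) (fun t ht => ?_) fun t ht => ?_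
  all_goals rw [interior_Ioi] at ht
  · exact (H.hasDerivAt_front ht).hasDerivWithinAt
  · exact neg_nonneg.2 (H.grad_front_nonpos ht)

end FrontMonotonicity

end IsGlobalSol

/-- The extension of a function on the moving domain `{t₀ ≤ t, 0 ≤ x ≤ s t}` to the whole plane,
constant outside of it in each variable. -/
def clampedExtension (t₀ : ℝ) (s : ℝ → ℝ) (f : ℝ → ℝ → ℝ) (t x : ℝ) : ℝ :=
  f (max t t₀) (max 0 (min x (s (max t t₀))))

lemma clampedExtension_of_mem {t₀ : ℝ} {s : ℝ → ℝ} (f : ℝ → ℝ → ℝ) {t x : ℝ}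
    (hx : x ∈ Icc 0 (s (max t t₀))) : clampedExtension t₀ s f t x = f (max t t₀) x := by
  rw [clampedExtension, min_eq_left hx.2, max_eq_right hx.1]

lemma clampedExtension_of_le_of_mem {t₀ : ℝ} {s : ℝ → ℝ} (f : ℝ → ℝ → ℝ) {t x : ℝ}
    (ht : t₀ ≤ t) (hx : x ∈ Icc 0 (s t)) : clampedExtension t₀ s f t x = f t x := by
  have hmax : max t t₀ = t := max_eq_left ht
  rw [clampedExtension_of_mem f (by rwa [hmax]), hmax]

namespace IsGlobalSol

variable {p s₀ : ℝ} {φ s : ℝ → ℝ} {u : ℝ → ℝ → ℝ} {t₀ : ℝ}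

section IntegratedForm

lemma continuous_clampedFront (H : IsGlobalSol p s₀ φ s u) (ht₀ : 0 < t₀) :
    Continuous fun t => s (max t t₀) :=
  H.continuousOn_front.comp_continuous (by fun_prop) fun _ => lt_max_of_lt_right ht₀

lemma clamp_mem (H : IsGlobalSol p s₀ φ s u) (ht₀ : 0 < t₀) (t x : ℝ) :
    max 0 (min x (s (max t t₀))) ∈ Icc 0 (s (max t t₀)) :=
  ⟨le_max_left _ _, max_le (H.front_pos (lt_max_of_lt_right ht₀)).le (min_le_right _ _)⟩

lemma continuous_clampedExtension (H : IsGlobalSol p s₀ φ s u) (ht₀ : 0 < t₀) {f : ℝ → ℝ → ℝ}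
    (hf : ContinuousOn (Function.uncurry f) {q : ℝ × ℝ | 0 < q.1 ∧ q.2 ∈ Icc 0 (s q.1)}) :
    Continuous (Function.uncurry (clampedExtension t₀ s f)) := by
  have hs : Continuous fun q : ℝ × ℝ => s (max q.1 t₀) :=
    (H.continuous_clampedFront ht₀).comp continuous_fst
  have hclamp : Continuous fun q : ℝ × ℝ => (max q.1 t₀, max 0 (min q.2 (s (max q.1 t₀)))) :=
    (continuous_fst.max continuous_const).prodMk (continuous_const.max (continuous_snd.min hs))
  exact hf.comp_continuous hclamp fun q => ⟨lt_max_of_lt_right ht₀, H.clamp_mem ht₀ _ _⟩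

lemma isPrimitiveOn_clampedExtension (H : IsGlobalSol p s₀ φ s u) (ht₀ : 0 < t₀) (t : ℝ) :
    IsPrimitiveOn (clampedExtension t₀ s u t) (clampedExtension t₀ s (fun t => deriv (u t)) t)
      (s (max t t₀)) := by
  intro x hx
  have hv := H.continuous_clampedExtension ht₀ H.continuousOn_temp
  have hw := H.continuous_clampedExtension ht₀ H.continuousOn_grad
  have hderiv : ∀ y ∈ Ioo 0 x, HasDerivAt (clampedExtension t₀ s u t)
      (clampedExtension t₀ s (fun t => deriv (u t)) t y) y := by
    intro y hy
    have hys : y ∈ Ioo 0 (s (max t t₀)) := ⟨hy.1, hy.2.trans_le hx.2⟩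
    rw [clampedExtension_of_mem _ (Ioo_subset_Icc_self hys)]
    refine (H.hasDerivAt_temp (lt_max_of_lt_right ht₀) hys).congr_of_eventuallyEq ?_
    filter_upwards [Ioo_mem_nhds hys.1 hys.2] with z hz
    exact clampedExtension_of_mem u (Ioo_subset_Icc_self hz)
  rw [intervalIntegral.integral_eq_sub_of_hasDerivAt_of_le hx.1
    (Continuous.continuousOn (by fun_prop)) hderiv
    (Continuous.intervalIntegrable (by fun_prop) _ _)]
  ring

variable {t t' x₀ x₁ x : ℝ}

lemma mem_Ioo_of_le (H : IsGlobalSol p s₀ φ s u) (ht : 0 < t) (hx₀ : 0 < x₀) (hx₁ : x₁ < s t)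
    {τ y : ℝ} (hτ : t ≤ τ) (hy : y ∈ Icc x₀ x₁) : y ∈ Ioo 0 (s τ) :=
  ⟨hx₀.trans_le hy.1, (hy.2.trans_lt hx₁).trans_le (H.monotoneOn_front ht (ht.trans_le hτ) hτ)⟩

lemma integral_temp_sub_eq_of_Ioo (H : IsGlobalSol p s₀ φ s u) (ht : 0 < t) (htt' : t ≤ t')
    (hx₀ : 0 < x₀) (hx₀₁ : x₀ ≤ x₁) (hx₁ : x₁ < s t) :
    ∫ y in x₀..x₁, (u t' y - u t y) = ∫ τ in t..t', (deriv (u τ) x₁ - deriv (u τ) x₀) := by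
  let g : ℝ → ℝ → ℝ := fun τ y => deriv (deriv (u (max t τ))) (max x₀ (min y x₁))
  have hgcont : Continuous (Function.uncurry g) :=
    H.continuousOn_deriv_grad.comp_continuous
      (f := fun q : ℝ × ℝ => (max t q.1, max x₀ (min q.2 x₁))) (by fun_prop) fun q =>
        ⟨lt_max_of_lt_left ht, H.mem_Ioo_of_le ht hx₀ hx₁ (le_max_left _ _)
          ⟨le_max_left _ _, max_le hx₀₁ (min_le_right _ _)⟩⟩
  have hg : ∀ τ ∈ uIcc t t', ∀ y ∈ uIcc x₀ x₁,
      0 < τ ∧ y ∈ Ioo 0 (s τ) ∧ g τ y = deriv (deriv (u τ)) y := by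
    intro τ hτ y hy
    rw [uIcc_of_le htt'] at hτ
    rw [uIcc_of_le hx₀₁] at hy
    refine ⟨ht.trans_le hτ.1, H.mem_Ioo_of_le ht hx₀ hx₁ hτ.1 hy, ?_⟩
    simp only [g, max_eq_right hτ.1, min_eq_left hy.2, max_eq_right hy.1]
  have hspace : ∀ y ∈ uIcc x₀ x₁, u t' y - u t y = ∫ τ in t..t', g τ y := by
    intro y hy
    refine (intervalIntegral.integral_eq_sub_of_hasDerivAt (f := fun τ => u τ y) (fun τ hτ => ?_)
      (Continuous.intervalIntegrable (by fun_prop) _ _)).symm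
    obtain ⟨hτ0, hys, hgτ⟩ := hg τ hτ y hy
    exact hgτ ▸ H.hasDerivAt_temp_time hτ0 hys
  have htime : ∀ τ ∈ uIcc t t', deriv (u τ) x₁ - deriv (u τ) x₀ = ∫ y in x₀..x₁, g τ y := by
    intro τ hτ
    refine (intervalIntegral.integral_eq_sub_of_hasDerivAt (f := deriv (u τ)) (fun y hy => ?_)
      (Continuous.intervalIntegrable (by fun_prop) _ _)).symm
    obtain ⟨hτ0, hys, hgτ⟩ := hg τ hτ y hy
    exact hgτ ▸ H.hasDerivAt_grad hτ0 hys
  rw [intervalIntegral.integral_congr hspace, intervalIntegral.integral_congr htime,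
    integral_integral_swap_of_continuous hgcont]

lemma integral_clampedExtension_sub_eq_of_Ioo (H : IsGlobalSol p s₀ φ s u) (ht₀ : 0 < t₀)
    (ht : t₀ ≤ t) (htt' : t ≤ t') (hx₀ : 0 < x₀) (hx₀₁ : x₀ ≤ x₁) (hx₁ : x₁ < s t) :
    ∫ y in x₀..x₁, (clampedExtension t₀ s u t' y - clampedExtension t₀ s u t y) =
      ∫ τ in t..t', (clampedExtension t₀ s (fun t => deriv (u t)) τ x₁ -
        clampedExtension t₀ s (fun t => deriv (u t)) τ x₀) := by
  have htpos : 0 < t := ht₀.trans_le ht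
  have hext : ∀ f : ℝ → ℝ → ℝ, ∀ τ, t ≤ τ → ∀ y ∈ Icc x₀ x₁,
      clampedExtension t₀ s f τ y = f τ y := fun f τ hτ y hy =>
    clampedExtension_of_le_of_mem f (ht.trans hτ)
      (Ioo_subset_Icc_self (H.mem_Ioo_of_le htpos hx₀ hx₁ hτ hy))
  refine (intervalIntegral.integral_congr fun y hy => ?_).trans
    ((H.integral_temp_sub_eq_of_Ioo htpos htt' hx₀ hx₀₁ hx₁).trans
      (intervalIntegral.integral_congr fun τ hτ => ?_))
  · rw [uIcc_of_le hx₀₁] at hy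
    simp only [hext u t' htt' y hy, hext u t le_rfl y hy]
  · rw [uIcc_of_le htt'] at hτ
    simp only [hext (fun t => deriv (u t)) τ hτ.1 _ (right_mem_Icc.2 hx₀₁),
      hext (fun t => deriv (u t)) τ hτ.1 _ (left_mem_Icc.2 hx₀₁)]

-- The segments from the midpoint `m` of `[0, s t]` to `0` and `x` approach both ends from inside.
lemma integral_clampedExtension_sub_eq (H : IsGlobalSol p s₀ φ s u) (ht₀ : 0 < t₀)
    (ht : t₀ ≤ t) (htt' : t ≤ t') (hx : x ∈ Icc 0 (s t)) :
    ∫ y in (0:ℝ)..x, (clampedExtension t₀ s u t' y - clampedExtension t₀ s u t y) =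
      ∫ τ in t..t', (clampedExtension t₀ s (fun t => deriv (u t)) τ x -
        clampedExtension t₀ s (fun t => deriv (u t)) τ 0) := by
  obtain ⟨hx0, hxs⟩ := hx
  have hs := H.front_pos (ht₀.trans_le ht)
  have hv := H.continuous_clampedExtension ht₀ H.continuousOn_temp
  have hw := H.continuous_clampedExtension ht₀ H.continuousOn_grad
  set v := clampedExtension t₀ s u
  set w := clampedExtension t₀ s fun t => deriv (u t)
  set m := s t / 2 with hm
  have hint : ∀ a b, IntervalIntegrable (fun y => v t' y - v t y) volume a b :=
    fun a b => Continuous.intervalIntegrable (by fun_prop) a b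
  have hprim : Continuous fun z => ∫ y in (0:ℝ)..z, (v t' y - v t y) :=
    intervalIntegral.continuous_primitive hint 0
  have hleft : Continuous fun θ : ℝ => (∫ y in (0:ℝ)..(x + θ * (m - x)), (v t' y - v t y)) -
      ∫ y in (0:ℝ)..(θ * m), (v t' y - v t y) :=
    (hprim.comp (by fun_prop : Continuous fun θ : ℝ => x + θ * (m - x))).sub
      (hprim.comp (by fun_prop : Continuous fun θ : ℝ => θ * m))
  have hright : Continuous fun θ : ℝ =>
      ∫ τ in t..t', (w τ (x + θ * (m - x)) - w τ (θ * m)) := by fun_prop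
  have heq : ∀ᶠ θ : ℝ in 𝓝[>] 0, (∫ y in (0:ℝ)..(x + θ * (m - x)), (v t' y - v t y)) -
      ∫ y in (0:ℝ)..(θ * m), (v t' y - v t y) =
        ∫ τ in t..t', (w τ (x + θ * (m - x)) - w τ (θ * m)) := by
    filter_upwards [Ioo_mem_nhdsGT (zero_lt_one' ℝ)] with θ hθ
    rw [intervalIntegral.integral_interval_sub_left (hint _ _) (hint _ _)]
    exact H.integral_clampedExtension_sub_eq_of_Ioo ht₀ ht htt' (by nlinarith [hθ.1])
      (by nlinarith [hθ.2]) (by nlinarith [hθ.1, hθ.2])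
  have hlim := tendsto_nhds_unique ((hleft.tendsto 0).mono_left nhdsWithin_le_nhds |>.congr' heq)
    ((hright.tendsto 0).mono_left nhdsWithin_le_nhds)
  simpa using hlim

lemma integratedSol (H : IsGlobalSol p s₀ φ s u) (ht₀ : 0 < t₀) :
    IntegratedSol p t₀ (fun t => s (max t t₀)) (clampedExtension t₀ s u)
      (clampedExtension t₀ s fun t => deriv (u t)) := by
  have hpos : ∀ t, 0 < max t t₀ := fun _ => lt_max_of_lt_right ht₀
  have hzero : ∀ t, (0:ℝ) ∈ Icc 0 (s (max t t₀)) :=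
    fun t => left_mem_Icc.2 (H.front_pos (hpos t)).le
  have hfront : ∀ t, s (max t t₀) ∈ Icc 0 (s (max t t₀)) :=
    fun t => right_mem_Icc.2 (H.front_pos (hpos t)).le
  exact {
    continuous_front := H.continuous_clampedFront ht₀
    monotone_front := fun a b hab => H.monotoneOn_front (hpos a) (hpos b) (max_le_max_right t₀ hab)
    front_pos := fun t => H.front_pos (hpos t)
    hasDerivAt_front := by
      intro t ht
      rw [clampedExtension_of_mem _ (hfront t), max_eq_left ht.le]
      refine (H.hasDerivAt_front (ht₀.trans ht)).congr_of_eventuallyEq ?_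
      filter_upwards [Ioi_mem_nhds ht] with τ hτ
      rw [max_eq_left (le_of_lt hτ)]
    continuous_temp := H.continuous_clampedExtension ht₀ H.continuousOn_temp
    continuous_grad := H.continuous_clampedExtension ht₀ H.continuousOn_grad
    temp_nonneg := fun t x => H.temp_nonneg (hpos t) (H.clamp_mem ht₀ t x)
    temp_front := fun t => (clampedExtension_of_mem u (hfront t)).trans (H.temp_front (hpos t))
    grad_zero := by
      intro t
      rw [clampedExtension_of_mem _ (hzero t), clampedExtension_of_mem _ (hzero t),
        H.grad_zero (hpos t)]
    grad_front_nonpos := by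
      intro t
      rw [clampedExtension_of_mem _ (hfront t)]
      exact H.grad_front_nonpos (hpos t)
    isPrimitiveOn_temp := H.isPrimitiveOn_clampedExtension ht₀
    heat := fun t t' x ht htt' hx =>
      H.integral_clampedExtension_sub_eq ht₀ ht htt' (by rwa [max_eq_left ht] at hx) }

end IntegratedForm

lemma tendsto_temp_zero (H : IsGlobalSol p s₀ φ s u) (hp : 1 < p) :
    Tendsto (fun t => u t 0) atTop (𝓝 0) := by
  refine ((H.integratedSol one_pos).tendsto_trace hp).congr' ?_
  filter_upwards [eventually_ge_atTop 1] with t ht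
  exact clampedExtension_of_le_of_mem u ht (left_mem_Icc.2 (H.front_pos (by linarith)).le)

end IsGlobalSol

section MaximumPrinciple

lemma deriv_deriv_nonpos_of_isLocalMax {f : ℝ → ℝ} {x : ℝ} (hf : ContinuousAt f x)
    (hmax : IsLocalMax f x) : deriv (deriv f) x ≤ 0 := by
  by_contra! hpos
  have hmin := isLocalMin_of_deriv_deriv_pos hpos hmax.deriv_eq_zero hf
  have hconst : f =ᶠ[𝓝 x] fun _ => f x := by
    filter_upwards [hmin, hmax] with y hle hge using le_antisymm hge hle
  have hzero : deriv (deriv f) x = 0 := by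
    rw [hconst.deriv.deriv_eq]
    simp
  exact hpos.ne' hzero

lemma deriv_nonneg_of_eventually_le_left {f : ℝ → ℝ} {t : ℝ} (hmax : ∀ᶠ τ in 𝓝[<] t, f τ ≤ f t) :
    0 ≤ deriv f t := by
  by_cases hf : DifferentiableAt ℝ f t
  · have hslope := (hasDerivWithinAt_iff_tendsto_slope' self_notMem_Iio).1
      (hf.hasDerivAt.hasDerivWithinAt (s := Iio t))
    refine ge_of_tendsto hslope ?_
    filter_upwards [hmax, self_mem_nhdsWithin] with τ hτ hlt
    rw [slope_def_field]
    exact div_nonneg_of_nonpos (sub_nonpos.2 hτ) (sub_nonpos.2 (le_of_lt hlt))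
  · rw [deriv_zero_of_not_differentiableAt hf]

/-- The part of the closed moving domain `{0 ≤ x ≤ s t}` between the times `a` and `b`. -/
def movingRegion (s : ℝ → ℝ) (a b : ℝ) : Set (ℝ × ℝ) :=
  {q | q.1 ∈ Icc a b ∧ q.2 ∈ Icc 0 (s q.1)}

variable {s : ℝ → ℝ} {a b : ℝ} {Z : ℝ → ℝ → ℝ}

lemma isCompact_movingRegion (hs : ContinuousOn s (Icc a b)) :
    IsCompact (movingRegion s a b) := by
  obtain ⟨M, hM⟩ := isCompact_Icc.bddAbove_image hs
  have hfront : ContinuousOn (fun q : ℝ × ℝ => s q.1 - q.2) (Icc a b ×ˢ Icc 0 M) :=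
    (hs.comp continuousOn_fst fun _ hq => hq.1).sub continuousOn_snd
  have hclosed : IsClosed ((Icc a b ×ˢ Icc 0 M) ∩ (fun q : ℝ × ℝ => s q.1 - q.2) ⁻¹' Ici 0) :=
    hfront.preimage_isClosed_of_isClosed (isClosed_Icc.prod isClosed_Icc) isClosed_Ici
  convert (isCompact_Icc.prod isCompact_Icc).of_isClosed_subset hclosed inter_subset_left using 1
  ext q
  refine ⟨fun hq => ⟨⟨hq.1, hq.2.1, ?_⟩, sub_nonneg.2 hq.2.2⟩,
    fun hq => ⟨hq.1.1, hq.1.2.1, sub_nonneg.1 hq.2⟩⟩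
  exact hq.2.2.trans (hM (mem_image_of_mem s hq.1))

lemma deriv_deriv_le_deriv_of_isMaxOn (hs : ContinuousOn s (Icc a b))
    (hZ : ContinuousOn (Function.uncurry Z) (movingRegion s a b)) {t x : ℝ} (ht : t ∈ Ioc a b)
    (hx : x ∈ Ioo 0 (s t)) (hmax : IsMaxOn (Function.uncurry Z) (movingRegion s a b) (t, x)) :
    deriv (deriv (Z t)) x ≤ deriv (fun τ => Z τ x) t := by
  have hslice : ContinuousOn (Z t) (Icc 0 (s t)) :=
    hZ.comp (f := fun y => (t, y)) (by fun_prop) fun y hy => ⟨Ioc_subset_Icc_self ht, hy⟩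
  have hspace : IsLocalMax (Z t) x := by
    filter_upwards [Icc_mem_nhds hx.1 hx.2] with y hy
    exact hmax (show (t, y) ∈ movingRegion s a b from ⟨Ioc_subset_Icc_self ht, hy⟩)
  have hfront : ∀ᶠ τ in 𝓝[<] t, x < s τ :=
    (hs t (Ioc_subset_Icc_self ht) |>.mono_of_mem_nhdsWithin
      (mem_of_superset (Ioo_mem_nhdsLT ht.1) fun _ hτ => ⟨hτ.1.le, hτ.2.le.trans ht.2⟩)
      |>.eventually_const_lt hx.2)
  have htime : ∀ᶠ τ in 𝓝[<] t, Z τ x ≤ Z t x := by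
    filter_upwards [hfront, Ioo_mem_nhdsLT ht.1] with τ hτ hτt
    exact hmax (show (τ, x) ∈ movingRegion s a b from
      ⟨⟨hτt.1.le, hτt.2.le.trans ht.2⟩, hx.1.le, hτ.le⟩)
  calc deriv (deriv (Z t)) x ≤ 0 :=
        deriv_deriv_nonpos_of_isLocalMax (hslice.continuousAt (Icc_mem_nhds hx.1 hx.2)) hspace
    _ ≤ deriv (fun τ => Z τ x) t := deriv_nonneg_of_eventually_le_left htime

lemma nonpos_of_deriv_lt_deriv_deriv (hs : ContinuousOn s (Icc a b))
    (hZ : ContinuousOn (Function.uncurry Z) (movingRegion s a b))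
    (hsub : ∀ t ∈ Ioc a b, ∀ x ∈ Ioo 0 (s t), deriv (fun τ => Z τ x) t < deriv (deriv (Z t)) x)
    (hinit : ∀ x ∈ Icc 0 (s a), Z a x ≤ 0) (hzero : ∀ t ∈ Icc a b, Z t 0 ≤ 0)
    (hfront : ∀ t ∈ Icc a b, Z t (s t) ≤ 0) {q : ℝ × ℝ} (hq : q ∈ movingRegion s a b) :
    Z q.1 q.2 ≤ 0 := by
  obtain ⟨⟨t, x⟩, ⟨ht, hx⟩, hmax⟩ := (isCompact_movingRegion hs).exists_isMaxOn ⟨q, hq⟩ hZ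
  refine (hmax hq).trans ?_
  change Z t x ≤ 0
  change t ∈ Icc a b at ht
  change x ∈ Icc 0 (s t) at hx
  rcases ht.1.eq_or_lt with rfl | hat
  · exact hinit x hx
  rcases hx.1.eq_or_lt with rfl | hx0
  · exact hzero t ht
  rcases hx.2.eq_or_lt with rfl | hxs
  · exact hfront t ht
  exact absurd (deriv_deriv_le_deriv_of_isMaxOn hs hZ ⟨hat, ht.2⟩ ⟨hx0, hxs⟩ hmax)
    (hsub t ⟨hat, ht.2⟩ x ⟨hx0, hxs⟩).not_ge

lemma nonpos_of_deriv_le_deriv_deriv (hs : ContinuousOn s (Icc a b))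
    (hZ : ContinuousOn (Function.uncurry Z) (movingRegion s a b))
    (hdiff : ∀ t ∈ Ioc a b, ∀ x ∈ Ioo 0 (s t), DifferentiableAt ℝ (fun τ => Z τ x) t)
    (hsub : ∀ t ∈ Ioc a b, ∀ x ∈ Ioo 0 (s t), deriv (fun τ => Z τ x) t ≤ deriv (deriv (Z t)) x)
    (hinit : ∀ x ∈ Icc 0 (s a), Z a x ≤ 0) (hzero : ∀ t ∈ Icc a b, Z t 0 ≤ 0)
    (hfront : ∀ t ∈ Icc a b, Z t (s t) ≤ 0) {q : ℝ × ℝ} (hq : q ∈ movingRegion s a b) :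
    Z q.1 q.2 ≤ 0 := by
  have hpert : ∀ δ > 0, Z q.1 q.2 - δ * (q.1 - a) ≤ 0 := by
    intro δ hδ
    have hshift : ∀ t ∈ Icc a b, 0 ≤ δ * (t - a) := fun t ht =>
      mul_nonneg hδ.le (sub_nonneg.2 ht.1)
    refine nonpos_of_deriv_lt_deriv_deriv (Z := fun t x => Z t x - δ * (t - a)) hs
      (hZ.sub (by fun_prop)) (fun t ht x hx => ?_) (fun x hx => by simpa using hinit x hx)
      (fun t ht => by linarith [hzero t ht, hshift t ht])
      (fun t ht => by linarith [hfront t ht, hshift t ht]) hq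
    have htime : HasDerivAt (fun τ => Z τ x - δ * (τ - a)) (deriv (fun τ => Z τ x) t - δ * 1) t :=
      (hdiff t ht x hx).hasDerivAt.sub (((hasDerivAt_id t).sub_const a).const_mul δ)
    have hspace : deriv (fun y => Z t y - δ * (t - a)) = deriv (Z t) :=
      funext fun y => deriv_sub_const _
    rw [htime.deriv, hspace]
    linarith [hsub t ht x hx]
  have hlim : Tendsto (fun δ : ℝ => Z q.1 q.2 - δ * (q.1 - a)) (𝓝[>] 0) (𝓝 (Z q.1 q.2)) := by
    have hcont : Continuous fun δ : ℝ => Z q.1 q.2 - δ * (q.1 - a) := by fun_prop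
    simpa using (hcont.tendsto 0).mono_left nhdsWithin_le_nhds
  exact le_of_tendsto hlim (eventually_mem_nhdsWithin.mono hpert)

end MaximumPrinciple

section HeatKernel

/-- The one-dimensional heat kernel without its normalising factor `(4π)^{-1/2}`, used as a barrier
that decays uniformly in time. -/
def heatKernel (τ x : ℝ) : ℝ := (√τ)⁻¹ * exp (-(x ^ 2) / (4 * τ))

variable {τ x : ℝ}

lemma heatKernel_nonneg (τ x : ℝ) : 0 ≤ heatKernel τ x := by
  unfold heatKernel
  positivity

lemma heatKernel_le (hτ : 0 ≤ τ) (x : ℝ) : heatKernel τ x ≤ (√τ)⁻¹ := by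
  refine mul_le_of_le_one_right (by positivity) (exp_le_one_iff.2 ?_)
  exact div_nonpos_of_nonpos_of_nonneg (neg_nonpos.2 (sq_nonneg x)) (by positivity)

lemma continuousOn_heatKernel : ContinuousOn (Function.uncurry heatKernel) {q | 0 < q.1} := by
  intro q hq
  have hq : 0 < q.1 := hq
  have hsqrt : √q.1 ≠ 0 := (sqrt_pos.2 hq).ne'
  have hden : 4 * q.1 ≠ 0 := by positivity
  refine ContinuousAt.continuousWithinAt ?_
  change ContinuousAt (fun q : ℝ × ℝ => (√q.1)⁻¹ * exp (-(q.2 ^ 2) / (4 * q.1))) q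
  fun_prop (disch := assumption)

lemma hasDerivAt_heatKernel (τ x : ℝ) :
    HasDerivAt (heatKernel τ) (-(x / (2 * τ)) * heatKernel τ x) x := by
  have h := ((((hasDerivAt_id x).pow 2).neg.div_const (4 * τ)).exp).const_mul (√τ)⁻¹
  refine h.congr_deriv ?_
  simp [heatKernel]
  ring

lemma hasDerivAt_deriv_heatKernel (τ x : ℝ) : HasDerivAt (deriv (heatKernel τ))
    ((x ^ 2 / (4 * τ ^ 2) - 1 / (2 * τ)) * heatKernel τ x) x := by
  rw [funext fun y => (hasDerivAt_heatKernel τ y).deriv]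
  refine (((hasDerivAt_id x).div_const (2 * τ)).neg.mul (hasDerivAt_heatKernel τ x)).congr_deriv ?_
  simp
  ring

lemma hasDerivAt_heatKernel_time (hτ : 0 < τ) (x : ℝ) :
    HasDerivAt (fun τ => heatKernel τ x) (deriv (deriv (heatKernel τ)) x) τ := by
  rw [(hasDerivAt_deriv_heatKernel τ x).deriv]
  have hsqrt : 0 < √τ := sqrt_pos.2 hτ
  have hinv := (hasDerivAt_sqrt hτ.ne').inv hsqrt.ne'
  have hexp := ((hasDerivAt_const τ (-(x ^ 2))).div ((hasDerivAt_id τ).const_mul 4)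
    (by simpa using hτ.ne')).exp
  refine (hinv.mul hexp).congr_deriv ?_
  simp only [id, sq_sqrt hτ.le, Pi.div_apply, Pi.inv_apply, heatKernel]
  field_simp
  ring

lemma exists_le_mul_heatKernel {f : ℝ → ℝ} {S : Set ℝ} (hS : IsCompact S) (hf : ContinuousOn f S)
    (hτ : 0 < τ) : ∃ K, 0 ≤ K ∧ ∀ x ∈ S, f x ≤ K * heatKernel τ x := by
  have hpos : ∀ x, 0 < heatKernel τ x := fun x =>
    mul_pos (inv_pos.2 (sqrt_pos.2 hτ)) (exp_pos _)
  have hquot : ContinuousOn (fun x => f x / heatKernel τ x) S :=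
    hf.div (fun x _ => (hasDerivAt_heatKernel τ x).continuousAt.continuousWithinAt)
      fun x _ => (hpos x).ne'
  obtain ⟨K, hK⟩ := hS.exists_bound_of_continuousOn hquot
  refine ⟨|K|, abs_nonneg K, fun x hx => (div_le_iff₀ (hpos x)).1 ?_⟩
  exact (le_norm_self _).trans ((hK x hx).trans (le_abs_self K))

end HeatKernel

/-- The amount by which `u` exceeds the barrier `ε + K * heatKernel`, whose kernel is started at
time `T - 1` so that it is smooth from time `T` on. -/
def barrierExcess (u : ℝ → ℝ → ℝ) (T ε K t x : ℝ) : ℝ := u t x - ε - K * heatKernel (t - T + 1) x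

namespace IsGlobalSol

variable {p s₀ : ℝ} {φ s : ℝ → ℝ} {u : ℝ → ℝ → ℝ} {T ε K t x : ℝ}

section Barrier

lemma continuousOn_barrierExcess (H : IsGlobalSol p s₀ φ s u) (hT : 0 < T) (ε K b : ℝ) :
    ContinuousOn (Function.uncurry (barrierExcess u T ε K)) (movingRegion s T b) := by
  have htemp : ContinuousOn (Function.uncurry u) (movingRegion s T b) :=
    H.continuousOn_temp.mono fun q hq => ⟨hT.trans_le hq.1.1, hq.2⟩
  have hkernel : ContinuousOn (fun q : ℝ × ℝ => heatKernel (q.1 - T + 1) q.2)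
      (movingRegion s T b) :=
    continuousOn_heatKernel.comp (f := fun q : ℝ × ℝ => (q.1 - T + 1, q.2)) (by fun_prop)
      fun q hq => (by linarith [hq.1.1] : 0 < q.1 - T + 1)
  exact (htemp.sub continuousOn_const).sub (continuousOn_const.mul hkernel)

lemma deriv_deriv_barrierExcess (H : IsGlobalSol p s₀ φ s u) (T ε K : ℝ) (ht : 0 < t)
    (hx : x ∈ Ioo 0 (s t)) : deriv (deriv (barrierExcess u T ε K t)) x =
      deriv (deriv (u t)) x - K * deriv (deriv (heatKernel (t - T + 1))) x := by
  have hderiv : deriv (barrierExcess u T ε K t) =ᶠ[𝓝 x]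
      fun y => deriv (u t) y - K * deriv (heatKernel (t - T + 1)) y := by
    filter_upwards [Ioo_mem_nhds hx.1 hx.2] with y hy
    exact (((H.hasDerivAt_temp ht hy).sub_const ε).sub
      ((hasDerivAt_heatKernel _ y).differentiableAt.hasDerivAt.const_mul K)).deriv
  rw [hderiv.deriv_eq]
  exact ((H.hasDerivAt_grad ht hx).sub
    ((hasDerivAt_deriv_heatKernel _ x).differentiableAt.hasDerivAt.const_mul K)).deriv

lemma hasDerivAt_barrierExcess_time (H : IsGlobalSol p s₀ φ s u) (hT : 0 < T) (ε K : ℝ)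
    (ht : T < t) (hx : x ∈ Ioo 0 (s t)) : HasDerivAt (fun τ => barrierExcess u T ε K τ x)
      (deriv (deriv (barrierExcess u T ε K t)) x) t := by
  rw [H.deriv_deriv_barrierExcess T ε K (hT.trans ht) hx]
  have hkernel := (hasDerivAt_heatKernel_time (by linarith : 0 < t - T + 1) x).comp t
    (((hasDerivAt_id t).sub_const T).add_const 1)
  rw [mul_one] at hkernel
  exact ((H.hasDerivAt_temp_time (hT.trans ht) hx).sub_const ε).sub (hkernel.const_mul K)

lemma temp_le_add_mul_heatKernel (H : IsGlobalSol p s₀ φ s u) (hT : 0 < T) (hε : 0 ≤ ε)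
    (hK : 0 ≤ K) (hzero : ∀ t, T ≤ t → u t 0 ≤ ε)
    (hinit : ∀ x ∈ Icc 0 (s T), u T x ≤ K * heatKernel 1 x) (ht : T ≤ t)
    (hx : x ∈ Icc 0 (s t)) : u t x ≤ ε + K * heatKernel (t - T + 1) x := by
  have hbarrier : ∀ t x, 0 ≤ K * heatKernel (t - T + 1) x :=
    fun t x => mul_nonneg hK (heatKernel_nonneg _ x)
  have hexcess : barrierExcess u T ε K t x ≤ 0 := by
    refine nonpos_of_deriv_le_deriv_deriv (q := (t, x))
      (H.continuousOn_front.mono fun r hr => hT.trans_le hr.1)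
      (H.continuousOn_barrierExcess hT ε K t)
      (fun r hr y hy => (H.hasDerivAt_barrierExcess_time hT ε K hr.1 hy).differentiableAt)
      (fun r hr y hy => (H.hasDerivAt_barrierExcess_time hT ε K hr.1 hy).deriv.le)
      (fun y hy => ?_) (fun r hr => ?_) (fun r hr => ?_) ⟨right_mem_Icc.2 ht, hx⟩
    all_goals unfold barrierExcess
    · rw [sub_self, zero_add]
      linarith [hinit y hy]
    · linarith [hzero r hr.1, hbarrier r 0]
    · linarith [H.temp_front (hT.trans_le hr.1), hbarrier r (s r)]
  unfold barrierExcess at hexcess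
  linarith

end Barrier

section SupNorm

lemma supNorm_nonneg (H : IsGlobalSol p s₀ φ s u) (ht : 0 < t) : 0 ≤ supNorm s u t :=
  Real.sSup_nonneg <| forall_mem_image.2 fun _ hx => H.temp_nonneg ht (Ioo_subset_Icc_self hx)

lemma supNorm_le (H : IsGlobalSol p s₀ φ s u) (ht : 0 < t) {M : ℝ}
    (hM : ∀ x ∈ Ioo 0 (s t), u t x ≤ M) : supNorm s u t ≤ M :=
  csSup_le ((nonempty_Ioo.2 (H.front_pos ht)).image _) (forall_mem_image.2 hM)

lemma exists_supNorm_le_add_mul_inv_sqrt (H : IsGlobalSol p s₀ φ s u) (hT : 0 < T) (hε : 0 ≤ ε)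
    (hzero : ∀ t, T ≤ t → u t 0 ≤ ε) :
    ∃ K, ∀ t, T ≤ t → supNorm s u t ≤ ε + K * (√(t - T + 1))⁻¹ := by
  obtain ⟨K, hK, hinit⟩ :=
    exists_le_mul_heatKernel isCompact_Icc (H.continuousOn_temp_slice hT) one_pos
  refine ⟨K, fun t ht => H.supNorm_le (hT.trans_le ht) fun x hx => ?_⟩
  calc u t x ≤ ε + K * heatKernel (t - T + 1) x :=
        H.temp_le_add_mul_heatKernel hT hε hK hzero hinit ht (Ioo_subset_Icc_self hx)
    _ ≤ ε + K * (√(t - T + 1))⁻¹ := by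
        gcongr
        exact heatKernel_le (by linarith) x

end SupNorm

end IsGlobalSol

lemma tendsto_const_mul_inv_sqrt_atTop (T K : ℝ) :
    Tendsto (fun t => K * (√(t - T + 1))⁻¹) atTop (𝓝 0) := by
  have hshift : Tendsto (fun t => t - T + 1) atTop atTop :=
    tendsto_atTop_add_const_right _ _ (tendsto_atTop_add_const_right _ (-T) tendsto_id)
  simpa using (tendsto_inv_atTop_zero.comp (tendsto_sqrt_atTop.comp hshift)).const_mul K

theorem stmt_15_general (p : ℝ) (hp : 1 < p) (s₀ : ℝ) (φ : ℝ → ℝ) (s : ℝ → ℝ) (u : ℝ → ℝ → ℝ)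
    (hsol : IsGlobalSol p s₀ φ s u) : Tendsto (fun t => supNorm s u t) atTop (𝓝 0) := by
  rw [tendsto_order]
  constructor
  · intro c hc
    filter_upwards [eventually_gt_atTop 0] with t ht using hc.trans_le (hsol.supNorm_nonneg ht)
  intro ε hε
  have htrace : ∀ᶠ t in atTop, u t 0 < ε / 2 :=
    (hsol.tendsto_temp_zero hp).eventually_lt_const (half_pos hε)
  obtain ⟨T, hT⟩ := eventually_atTop.1 (htrace.and (eventually_gt_atTop 0))
  obtain ⟨K, hbound⟩ := hsol.exists_supNorm_le_add_mul_inv_sqrt (hT T le_rfl).2 (half_pos hε).le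
    fun t ht => (hT t ht).1.le
  have hkernel : ∀ᶠ t in atTop, K * (√(t - T + 1))⁻¹ < ε / 2 :=
    (tendsto_const_mul_inv_sqrt_atTop T K).eventually_lt_const (half_pos hε)
  filter_upwards [hkernel, eventually_ge_atTop T] with t ht hTt
  linarith [hbound t hTt]

/-- Proposition 4.1: decay of the sup norm of global-in-time solutions. -/
theorem stmt_15 (p : ℝ) (hp : 1 < p) (s₀ : ℝ) (φ : ℝ → ℝ) (hW : memW s₀ φ)
    (s : ℝ → ℝ) (u : ℝ → ℝ → ℝ) (hsol : IsGlobalSol p s₀ φ s u) :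
    Tendsto (fun t => supNorm s u t) atTop (𝓝 0) :=
  stmt_15_general p hp s₀ φ s u hsol
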